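/- arXiv:math/0304413 — 5 statements merged into one kernel-verified Lean document; each statement's English description precedes it below -/
import Mathlib

section
/- Let G be a finite group and χ an irreducible faithful character of G with χ(1) > 1. If η(χ) is odd, then the order of G is even. -/
open scoped Classical BigOperators

/-- Inner product of class functions on a finite group. -/
noncomputable def charInner (G : Type) [Group G] [Fintype G] (φ ψ : G → ℂ) : ℂ :=
  (Fintype.card G : ℂ)⁻¹ * ∑ g : G, φ g * (starRingEnd ℂ) (ψ g)

/-- `χ` is the character of an irreducible complex representation of `G`. -/
def IsIrrChar (G : Type) [Group G] [Fintype G] (χ : G → ℂ) : Prop :=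
  ∃ V : FDRep ℂ G, CategoryTheory.Simple V ∧ V.character = χ

/-- The number of distinct non-principal irreducible constituents of `χ ⬝ conj χ`. -/
noncomputable def etaChar (G : Type) [Group G] [Fintype G] (χ : G → ℂ) : ℕ :=
  Set.ncard {α : G → ℂ | IsIrrChar G α ∧ α ≠ (fun _ => 1) ∧
    charInner G (fun g => χ g * (starRingEnd ℂ) (χ g)) α ≠ 0}

/-- Kernel of a character, as a set. -/
def charKer (G : Type) [Group G] (χ : G → ℂ) : Set G := {g | χ g = χ 1}

/-- Induced character from a subgroup. -/
noncomputable def indChar (K : Type) [Group K] [Fintype K] (H : Subgroup K) (φ : H → ℂ) :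
    K → ℂ := fun k =>
  (Nat.card H : ℂ)⁻¹ * ∑ x : K, if h : x⁻¹ * k * x ∈ H then φ ⟨x⁻¹ * k * x, h⟩ else 0


/-- Derived length of a group. -/
noncomputable def derivedLength (G : Type) [Group G] : ℕ :=
  sInf {n | derivedSeries G n = ⊥}

/-- A finite group is supersolvable if it has a chain of normal subgroups of `G`
from `⊥` to `⊤` with cyclic factors. -/
def IsSupersolvableGroup (G : Type) [Group G] : Prop :=
  ∃ (n : ℕ) (H : Fin (n + 1) → Subgroup G),
    (∀ i, (H i).Normal) ∧ Monotone H ∧ H 0 = ⊥ ∧ H (Fin.last n) = ⊤ ∧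
    ∀ i : Fin n, ∃ g ∈ H i.succ, H i.succ ≤ H i.castSucc ⊔ Subgroup.zpowers g

open Matrix ComplexOrder in
theorem aux_conj_trace {G : Type} [Group G] [Fintype G] {n : ℕ}
    (M : G →* Matrix (Fin n) (Fin n) ℂ) (g : G) :
    (starRingEnd ℂ) (M g).trace = (M g⁻¹).trace := by
  set H : Matrix (Fin n) (Fin n) ℂ := ∑ x : G, (M x)ᴴ * M x with hH
  have hpos : H.PosDef := by
    rw [hH, ← Finset.add_sum_erase _ _ (Finset.mem_univ (1 : G))]
    refine Matrix.PosDef.add_posSemidef (by simpa using Matrix.PosDef.one) ?_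
    exact Matrix.posSemidef_sum _ fun x _ => Matrix.posSemidef_conjTranspose_mul_self _
  have hinv : (M g)ᴴ * H * M g = H := by
    rw [hH, Finset.mul_sum, Finset.sum_mul]
    refine Fintype.sum_equiv (Equiv.mulRight g) _ _ fun x => ?_
    simp [Matrix.conjTranspose_mul, Matrix.mul_assoc]
  have hU : IsUnit H.det := (Matrix.isUnit_iff_isUnit_det _).1 hpos.isUnit
  have h1 : (M g) * M g⁻¹ = 1 := by rw [← map_mul]; simp
  have h2 : (M g)ᴴ = H * M g⁻¹ * H⁻¹ := by
    calc (M g)ᴴ = (M g)ᴴ * H * (M g * M g⁻¹) * H⁻¹ := by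
          rw [h1, mul_one, Matrix.mul_assoc, Matrix.mul_nonsing_inv _ hU, mul_one]
      _ = ((M g)ᴴ * H * M g) * M g⁻¹ * H⁻¹ := by simp only [Matrix.mul_assoc]
      _ = _ := by rw [hinv]
  have h3 := Matrix.trace_conjTranspose (M g)
  rw [h2, Matrix.trace_mul_comm, ← Matrix.mul_assoc, Matrix.nonsing_inv_mul _ hU, one_mul] at h3
  exact h3.symm

open Matrix ComplexOrder in
theorem aux_idem_trace {ι : Type} [Fintype ι] [DecidableEq ι] (Q : Matrix ι ι ℂ)
    (h : Q * Q = Q) : ∃ k : ℕ, Q.trace = k := by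
  have hi : IsIdempotentElem (Matrix.toLin' Q) := by
    unfold IsIdempotentElem
    rw [Module.End.mul_eq_comp, ← Matrix.toLin'_mul, h]
  have := (LinearMap.IsIdempotentElem.isProj_range _ hi).trace
  rw [Matrix.trace_toLin'_eq] at this
  exact ⟨_, this⟩

open Matrix Kronecker in
theorem aux_fs {G : Type} [Group G] [Fintype G] {n : ℕ}
    (M : G →* Matrix (Fin n) (Fin n) ℂ)
    (h : ∑ g : G, (M g).trace * (M g).trace = Fintype.card G) :
    ∑ g : G, (M (g * g)).trace ≠ 0 := by
  have hc : (Fintype.card G : ℂ) ≠ 0 := by simp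
  set T : Matrix (Fin n × Fin n) (Fin n × Fin n) ℂ := ∑ g : G, M g ⊗ₖ M g with hT
  have hxT (x : G) : (M x ⊗ₖ M x) * T = T := by
    rw [hT, Finset.mul_sum]
    refine Fintype.sum_equiv (Equiv.mulLeft x) _ _ fun g => ?_
    simp [Matrix.mul_kronecker_mul]
  have hTT : T * T = (Fintype.card G : ℂ) • T := by
    conv_lhs => rw [hT, Finset.sum_mul]
    rw [← hT]
    simp [hxT, Nat.cast_smul_eq_nsmul]
  set S : Matrix (Fin n × Fin n) (Fin n × Fin n) ℂ :=
    Matrix.of fun a b => if a.swap = b then 1 else 0 with hS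
  have hSl (A : Matrix (Fin n × Fin n) (Fin n × Fin n) ℂ) (a b) :
      (S * A) a b = A a.swap b := by simp [hS, Matrix.mul_apply]
  have hSr (A : Matrix (Fin n × Fin n) (Fin n × Fin n) ℂ) (a b) :
      (A * S) a b = A a b.swap := by
    rw [Matrix.mul_apply, Finset.sum_eq_single b.swap]
    · simp [hS]
    · intro c _ hcb
      have : c.swap ≠ b := fun e => hcb (by rw [← e, Prod.swap_swap])
      simp [hS, this]
    · simp
  have hSS : S * S = 1 := by
    ext a b
    rw [hSl]
    simp [hS, Matrix.one_apply]
  have hST : S * T = T * S := by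
    ext a b
    rw [hSl, hSr]
    simp [hT, Matrix.sum_apply, mul_comm]
  set c : ℂ := (Fintype.card G : ℂ)
  have hid : ((2 * c)⁻¹ • (T + S * T)) * ((2 * c)⁻¹ • (T + S * T)) =
      (2 * c)⁻¹ • (T + S * T) := by
    have e : (T + S * T) * (T + S * T) = (2 * c) • (T + S * T) := by
      have e1 : T * (S * T) = c • (S * T) := by
        rw [← Matrix.mul_assoc, ← hST, Matrix.mul_assoc, hTT, Matrix.mul_smul]
      have e2 : (S * T) * T = c • (S * T) := by
        rw [Matrix.mul_assoc, hTT, Matrix.mul_smul]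
      have e3 : (S * T) * (S * T) = c • T := by
        rw [Matrix.mul_assoc, e1, Matrix.mul_smul, ← Matrix.mul_assoc, hSS, one_mul]
      rw [add_mul, mul_add, mul_add, e1, e2, e3, hTT]
      module
    rw [Matrix.smul_mul, Matrix.mul_smul, e, smul_smul (2 * c)⁻¹ (2 * c),
      inv_mul_cancel₀ (by simpa using hc), one_smul]
  obtain ⟨k, hk⟩ := aux_idem_trace _ hid
  have t1 : T.trace = c := by
    rw [hT, Matrix.trace_sum, ← h]
    simp [Matrix.trace_kronecker]
  have t2 : (S * T).trace = ∑ g : G, (M (g * g)).trace := by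
    rw [hT, Finset.mul_sum, Matrix.trace_sum]
    refine Finset.sum_congr rfl fun g _ => ?_
    rw [map_mul]
    simp only [Matrix.trace, Matrix.diag_apply, hSl, Fintype.sum_prod_type, Matrix.mul_apply,
      Matrix.kroneckerMap_apply, Prod.swap]
    rw [Finset.sum_comm]
  intro h0
  rw [Matrix.trace_smul, Matrix.trace_add, t1, t2, h0, smul_eq_mul, add_zero, mul_inv,
    mul_assoc, inv_mul_cancel₀ hc, mul_one, inv_eq_iff_eq_inv] at hk
  have hk0 : (k : ℂ) ≠ 0 := by
    rintro h
    rw [h] at hk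
    simp at hk
  have : (2 * k : ℂ) = 1 := by rw [hk, inv_mul_cancel₀ hk0]
  have : 2 * k = 1 := by exact_mod_cast this
  omega

/-- Every representation has a matrix form. -/
theorem aux_matrix {G : Type} [Group G] (V : FDRep ℂ G) :
    ∃ (n : ℕ) (M : G →* Matrix (Fin n) (Fin n) ℂ), ∀ g, V.character g = (M g).trace := by
  let b := Module.finBasis ℂ V
  refine ⟨_, (LinearMap.toMatrixAlgEquiv b).toAlgHom.toMonoidHom.comp V.ρ, fun g => ?_⟩
  simp only [FDRep.character]
  rw [LinearMap.trace_eq_matrix_trace ℂ b]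
  rfl

theorem aux_conj_char {G : Type} [Group G] [Fintype G] (V : FDRep ℂ G) (g : G) :
    (starRingEnd ℂ) (V.character g) = V.character g⁻¹ := by
  obtain ⟨n, M, hM⟩ := aux_matrix V
  rw [hM, hM, aux_conj_trace]

theorem aux_irr_conj {G : Type} [Group G] [Fintype G] {α : G → ℂ} (h : IsIrrChar G α) :
    IsIrrChar G (fun g => (starRingEnd ℂ) (α g)) := by
  obtain ⟨V, hV, rfl⟩ := h
  refine ⟨FDRep.of (Representation.dual V.ρ), ?_, ?_⟩
  · rw [FDRep.simple_iff_char_is_norm_one] at hV ⊢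
    rw [← hV]
    refine Finset.sum_congr rfl fun g _ => ?_
    rw [FDRep.char_dual, FDRep.char_dual, inv_inv, mul_comm]
  · ext g
    rw [FDRep.char_dual, aux_conj_char]

theorem aux_sum_zero {G : Type} [Group G] [Fintype G] {α : G → ℂ} (h : IsIrrChar G α)
    (h1 : α ≠ fun _ => 1) : ∑ g, α g = 0 := by
  obtain ⟨V, hV, rfl⟩ := h
  let W : FDRep ℂ G := FDRep.of (Representation.trivial ℂ G ℂ)
  have hW : ∀ g, W.character g = 1 := by
    intro g
    have : W.ρ g = LinearMap.id := rfl
    rw [FDRep.character, this]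
    exact (LinearMap.trace_id ℂ ℂ).trans (by simp)
  have hWs : CategoryTheory.Simple W := by
    rw [FDRep.simple_iff_char_is_norm_one]
    simp [hW]
  have := invertibleOfNonzero (NeZero.ne (Nat.card G : ℂ))
  have key := FDRep.char_orthonormal V W
  rw [if_neg] at key
  · simpa [hW] using key
  · rintro ⟨i⟩
    exact h1 (by rw [FDRep.char_iso i]; ext g; exact hW g)

theorem aux_no_real {G : Type} [Group G] [Fintype G] {α : G → ℂ} (hG : Odd (Fintype.card G))
    (h : IsIrrChar G α) (h1 : α ≠ fun _ => 1) (hr : (fun g => (starRingEnd ℂ) (α g)) = α) :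
    False := by
  have h0 := aux_sum_zero h h1
  obtain ⟨V, hV, rfl⟩ := h
  obtain ⟨n, M, hM⟩ := aux_matrix V
  refine aux_fs M ?_ ?_
  · rw [FDRep.simple_iff_char_is_norm_one] at hV
    rw [← Nat.card_eq_fintype_card, ← hV]
    refine Finset.sum_congr rfl fun g _ => ?_
    rw [← aux_conj_char, congrFun hr g, hM]
  · rw [← h0]
    have hco : (Nat.card G).Coprime 2 := by
      rw [Nat.card_eq_fintype_card]; exact hG.coprime_two_right
    refine Fintype.sum_equiv (powCoprime hco) _ _ fun g => ?_
    rw [hM]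
    simp [pow_two]

/-- If `χ` is faithful with `χ(1) > 1` and `η(χ)` is odd, then `|G|` is even. -/
theorem even_card_of_odd_eta (G : Type) [Group G] [Fintype G] (χ : G → ℂ)
    (hχ : IsIrrChar G χ) (hfaithful : ∀ g : G, χ g = χ 1 → g = 1)
    (hdeg : 1 < (χ 1).re) (hodd : Odd (etaChar G χ)) :
    Even (Fintype.card G) := by
  by_contra hne
  rw [Nat.not_even_iff_odd] at hne
  unfold etaChar at hodd
  set s := {α : G → ℂ | IsIrrChar G α ∧ α ≠ (fun _ => 1) ∧
    charInner G (fun g => χ g * (starRingEnd ℂ) (χ g)) α ≠ 0} with hs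
  have hfin : s.Finite := by
    by_contra hinf
    rw [Set.Infinite.ncard hinf] at hodd
    simp at hodd
  have hconj : ∀ α ∈ s, (fun g => (starRingEnd ℂ) (α g)) ∈ s := by
    rintro α ⟨ha, ha1, ha2⟩
    refine ⟨aux_irr_conj ha, fun e => ha1 ?_, fun e => ha2 ?_⟩
    · ext g
      have := congrArg (starRingEnd ℂ) (congrFun e g)
      simpa using this
    · have := congrArg (starRingEnd ℂ) e
      simp only [charInner, map_mul, map_sum, map_inv₀, map_natCast, map_zero,
        Complex.conj_conj] at this ⊢
      rw [← this]
      simp only [mul_comm]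
  rw [Set.ncard_eq_toFinset_card s hfin] at hodd
  have hz : ∑ _α ∈ hfin.toFinset, (1 : ZMod 2) = 0 := by
    refine Finset.sum_involution (fun α _ => fun g => (starRingEnd ℂ) (α g)) ?_ ?_ ?_ ?_
    · intros; decide
    · intro α ha _ e
      obtain ⟨h1, h2, -⟩ := hfin.mem_toFinset.1 ha
      exact aux_no_real hne h1 h2 e
    · intro α ha
      exact hfin.mem_toFinset.2 (hconj α (hfin.mem_toFinset.1 ha))
    · intro α ha
      simp
  rw [Finset.sum_const, nsmul_one, ZMod.natCast_eq_zero_iff_even] at hz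
  exact (Nat.not_even_iff_odd.2 hodd) hz
end

section
/- Let G be a finite group, χ ∈ Irr(G), and let α_1, …, α_n be the distinct non-principal irreducible constituents of χ·conj(χ). Let N be a normal subgroup of G. Then the restriction χ_N is irreducible if and only if N is not contained in Ker(α_i) for any i = 1, …, n. -/
open scoped Classical BigOperators

open CategoryTheory in
lemma aux_simple_iff {G : Type} [Group G] [Fintype G] {V : Type} [AddCommGroup V] [Module ℂ V]
    [FiniteDimensional ℂ V] (ρ : Representation ℂ G V) :
    Simple (FDRep.of ρ) ↔ ∑ g : G, ρ.character g * ρ.character g⁻¹ = Nat.card G :=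
  FDRep.simple_iff_char_is_norm_one (FDRep.of ρ)

open scoped ComplexOrder in
/-- character values at inverses are complex conjugates -/
lemma aux_char_inv {G : Type} [Group G] [Fintype G] {V : Type} [AddCommGroup V] [Module ℂ V]
    [FiniteDimensional ℂ V] (ρ : Representation ℂ G V) (g : G) :
    ρ.character g⁻¹ = (starRingEnd ℂ) (ρ.character g) := by
  let b := Module.finBasis ℂ V
  let M : G → Matrix _ _ ℂ := fun g => LinearMap.toMatrix b b (ρ g)
  have hM : ∀ g h, M (g * h) = M g * M h := by
    intro g h
    simp only [M, map_mul, LinearMap.toMatrix_mul]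
  have hM1 : M 1 = 1 := by simp [M]
  have htr : ∀ g, ρ.character g = (M g).trace := by
    intro g
    exact LinearMap.trace_eq_matrix_trace ℂ b (ρ g)
  let P := ∑ h : G, (M h).conjTranspose * M h
  have hP : P.PosDef := by
    have h1 : P = (M 1).conjTranspose * M 1 +
        ∑ h ∈ Finset.univ.erase (1 : G), (M h).conjTranspose * M h :=
      (Finset.add_sum_erase _ _ (Finset.mem_univ 1)).symm
    rw [h1, hM1]
    refine Matrix.PosDef.add_posSemidef ?_ ?_
    · simpa using Matrix.PosDef.one
    · exact Matrix.posSemidef_sum _ fun i _ => Matrix.posSemidef_conjTranspose_mul_self _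
  have hinv : ∀ g, (M g).conjTranspose * P * M g = P := by
    intro g
    simp only [P, Finset.mul_sum, Finset.sum_mul]
    refine Fintype.sum_equiv (Equiv.mulRight g) _ _ fun h => ?_
    simp [hM, Matrix.mul_assoc]
  have hPu : IsUnit P := hP.isUnit
  have hP2 : P * P⁻¹ = 1 := Matrix.mul_nonsing_inv P ((Matrix.isUnit_iff_isUnit_det _).1 hPu)
  have key : P * M g⁻¹ * P⁻¹ = (M g).conjTranspose := by
    have : P * M g⁻¹ = (M g).conjTranspose * P := by
      conv_lhs => rw [← hinv g]
      rw [Matrix.mul_assoc, ← hM, mul_inv_cancel, hM1, Matrix.mul_one]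
    rw [this, Matrix.mul_assoc, hP2, Matrix.mul_one]
  rw [htr, htr, starRingEnd_apply, ← Matrix.trace_conjTranspose, ← key, Matrix.trace_conj hPu]

lemma aux_inv (G : Type) [Group G] [Fintype G] : (Nat.card G : ℂ) ≠ 0 := by
  simp

lemma aux_inner {G : Type} [Group G] [Fintype G] {V W : Type} [AddCommGroup V] [Module ℂ V]
    [FiniteDimensional ℂ V] [AddCommGroup W] [Module ℂ W]
    [FiniteDimensional ℂ W] (ρ : Representation ℂ G V) (σ : Representation ℂ G W) :
    charInner G σ.character ρ.character = Module.finrank ℂ (ρ.IntertwiningMap σ) := by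
  have := invertibleOfNonzero (aux_inv G)
  rw [← Representation.card_inv_mul_sum_char_mul_char_eq_finrank]
  simp [charInner, aux_char_inv]

lemma aux_linHom {G : Type} [Group G] [Fintype G] {V : Type} [AddCommGroup V] [Module ℂ V]
    [FiniteDimensional ℂ V] (ρ : Representation ℂ G V) :
    (fun g => ρ.character g * (starRingEnd ℂ) (ρ.character g)) =
      (Representation.linHom ρ ρ).character := by
  ext g
  rw [Representation.char_linHom, aux_char_inv, mul_comm]

/-- restriction is irreducible iff the `N`-endomorphisms are one-dimensional -/
lemma aux_res {G : Type} [Group G] [Fintype G] {V : Type} [AddCommGroup V] [Module ℂ V]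
    [FiniteDimensional ℂ V] (ρ : Representation ℂ G V) (N : Subgroup G) :
    IsIrrChar N (fun x => ρ.character x) ↔
      Module.finrank ℂ (Representation.invariants ((Representation.linHom ρ ρ).comp N.subtype)) = 1 := by
  have := invertibleOfNonzero (aux_inv N)
  have h1 := Representation.card_inv_mul_sum_char_eq_finrank
    ((Representation.linHom ρ ρ).comp N.subtype)
  have h2 : ∀ n : N, Representation.character ((Representation.linHom ρ ρ).comp N.subtype) n =
      ρ.character n * ρ.character (n : G)⁻¹ := by
    intro n
    rw [mul_comm]
    exact Representation.char_linHom ρ ρ (n : G)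
  simp only [h2] at h1
  have h3 : IsIrrChar N (fun x => ρ.character x) ↔
      ∑ n : N, ρ.character n * ρ.character (n : G)⁻¹ = Nat.card N := by
    constructor
    · rintro ⟨U, hU, hc⟩
      have := (FDRep.simple_iff_char_is_norm_one U).1 hU
      simpa [hc] using this
    · intro h
      exact ⟨FDRep.of (ρ.comp N.subtype), (aux_simple_iff _).2 h, rfl⟩
  rw [h3, ← Nat.cast_inj (R := ℂ), ← h1, Nat.cast_one, inv_mul_eq_one₀ (aux_inv N), eq_comm]

/-- if the character is constant on `N` then `N` acts trivially -/
lemma aux_ker {G : Type} [Group G] [Fintype G] {V : Type} [AddCommGroup V] [Module ℂ V]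
    [FiniteDimensional ℂ V] (ρ : Representation ℂ G V) (N : Subgroup G)
    (h : (N : Set G) ⊆ charKer G ρ.character) (n : G) (hn : n ∈ N) (v : V) : ρ n v = v := by
  have := invertibleOfNonzero (aux_inv N)
  have h1 := Representation.card_inv_mul_sum_char_eq_finrank (ρ.comp N.subtype)
  have h2 : ∀ n : N, Representation.character (ρ.comp N.subtype) n = Module.finrank ℂ V := by
    intro n
    rw [← Representation.char_one ρ]
    exact h n.2
  simp only [h2, Finset.sum_const, Finset.card_univ, nsmul_eq_mul] at h1
  rw [← Nat.card_eq_fintype_card, inv_mul_cancel_left₀ (aux_inv N), Nat.cast_inj] at h1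
  have h3 := Submodule.eq_top_of_finrank_eq h1.symm
  have h4 : v ∈ Representation.invariants (ρ.comp N.subtype) := h3 ▸ Submodule.mem_top
  exact h4 ⟨n, hn⟩

/-- existence of an irreducible subrepresentation in a nonzero one -/
lemma aux_exists {G : Type} [Group G] [Fintype G] {V : Type} [AddCommGroup V] [Module ℂ V]
    [FiniteDimensional ℂ V] (ρ : Representation ℂ G V) (W : Subrepresentation ρ) (hW : W ≠ ⊥) :
    ∃ S : Subrepresentation ρ, S ≤ W ∧ S ≠ ⊥ ∧ S.toRepresentation.IsIrreducible := by
  have hex : ∃ n, ∃ S : Subrepresentation ρ, S ≤ W ∧ S ≠ ⊥ ∧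
    Module.finrank ℂ S.toSubmodule = n := ⟨_, W, le_rfl, hW, rfl⟩
  obtain ⟨S, hSW, hS0, hSn⟩ := Nat.find_spec hex
  refine ⟨S, hSW, hS0, ?_⟩
  have hmin : ∀ T : Subrepresentation ρ, T ≤ S → T ≠ ⊥ → T.toSubmodule = S.toSubmodule := by
    intro T hTS hT0
    refine Submodule.eq_of_le_of_finrank_le hTS ?_
    rw [hSn]
    exact Nat.find_min' hex ⟨T, hTS.trans hSW, hT0, rfl⟩
  have hnt : Nontrivial (Subrepresentation S.toRepresentation) := by
    refine ⟨⊥, ⊤, fun h => hS0 ?_⟩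
    apply Subrepresentation.toSubmodule_injective
    have h' : (⊥ : Submodule ℂ S.toSubmodule) = ⊤ := congrArg Subrepresentation.toSubmodule h
    change S.toSubmodule = ⊥
    rw [eq_bot_iff]
    intro x hx
    have : (⟨x, hx⟩ : S.toSubmodule) ∈ (⊥ : Submodule ℂ S.toSubmodule) := h' ▸ Submodule.mem_top
    simpa using this
  refine ⟨fun T => ?_⟩
  let T' : Subrepresentation ρ :=
    { toSubmodule := T.toSubmodule.map S.toSubmodule.subtype
      apply_mem_toSubmodule := by
        rintro g _ ⟨x, hx, rfl⟩
        exact ⟨S.toRepresentation g x, T.apply_mem_toSubmodule g hx, rfl⟩ }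
  by_cases hT : T' = ⊥
  · left
    apply Subrepresentation.toSubmodule_injective
    have h' : T.toSubmodule.map S.toSubmodule.subtype = ⊥ := congrArg Subrepresentation.toSubmodule hT
    change T.toSubmodule = ⊥
    exact Submodule.map_injective_of_injective S.toSubmodule.injective_subtype
      (h'.trans (Submodule.map_bot _).symm)
  · right
    have h' : T.toSubmodule.map S.toSubmodule.subtype = S.toSubmodule := hmin T'
      (Submodule.map_subtype_le _ _) hT
    apply Subrepresentation.toSubmodule_injective
    change T.toSubmodule = ⊤
    apply Submodule.map_injective_of_injective S.toSubmodule.injective_subtype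
    change T.toSubmodule.map S.toSubmodule.subtype = (⊤ : Submodule ℂ S.toSubmodule).map _
    rw [h', Submodule.map_subtype_top]

/-- an irreducible character having a nonzero map to the trivial representation is trivial -/
lemma aux_triv {G : Type} [Group G] [Fintype G] (S : FDRep ℂ G) (hS : CategoryTheory.Simple S)
    (h : charInner G (fun _ => 1) S.character ≠ 0) : S.character = fun _ => 1 := by
  have := invertibleOfNonzero (aux_inv G)
  have hc : (FDRep.of (Representation.trivial ℂ G ℂ)).character = fun _ => 1 := by
    ext g
    change LinearMap.trace ℂ ℂ (Representation.trivial ℂ G ℂ g) = 1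
    have : Representation.trivial ℂ G ℂ g = LinearMap.id := rfl
    rw [this, LinearMap.trace_id]
    simp
  have hT : CategoryTheory.Simple (FDRep.of (Representation.trivial ℂ G ℂ)) := by
    rw [FDRep.simple_iff_char_is_norm_one, hc]
    simp
  have h1 := FDRep.char_orthonormal (FDRep.of (Representation.trivial ℂ G ℂ)) S
  by_cases hn : Nonempty (FDRep.of (Representation.trivial ℂ G ℂ) ≅ S)
  · rw [← hc]
    exact (FDRep.char_iso hn.some).symm
  · exfalso
    apply h
    rw [if_neg hn, hc] at h1
    have h2 : ∀ g, S.character g⁻¹ = (starRingEnd ℂ) (S.character g) := aux_char_inv S.ρ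
    simpa [charInner, h2] using h1

lemma aux_trivchar {G : Type} [Group G] [Fintype G] :
    (Representation.trivial ℂ G ℂ).character = fun _ => 1 := by
  ext g
  change LinearMap.trace ℂ ℂ (Representation.trivial ℂ G ℂ g) = 1
  have : Representation.trivial ℂ G ℂ g = LinearMap.id := rfl
  rw [this, LinearMap.trace_id]
  simp

lemma aux_main {G : Type} [Group G] [Fintype G] {V : Type} [AddCommGroup V] [Module ℂ V]
    [FiniteDimensional ℂ V] (ρ : Representation ℂ G V)
    (hρ : CategoryTheory.Simple (FDRep.of ρ)) (n : ℕ) (α : Fin n → (G → ℂ))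
    (hirr : ∀ i, IsIrrChar G (α i)) (hnp : ∀ i, α i ≠ fun _ => 1)
    (hconst : ∀ i, charInner G
      (fun g => ρ.character g * (starRingEnd ℂ) (ρ.character g)) (α i) ≠ 0)
    (hall : ∀ β : G → ℂ, IsIrrChar G β → β ≠ (fun _ => 1) →
      charInner G (fun g => ρ.character g * (starRingEnd ℂ) (ρ.character g)) β ≠ 0 →
        ∃ i, β = α i)
    (N : Subgroup G) (hN : N.Normal) :
    IsIrrChar ↥N (fun x => ρ.character x) ↔ ∀ i, ¬ ((N : Set G) ⊆ charKer G (α i)) := by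
  rw [aux_linHom] at hconst hall
  rw [aux_res]
  have hinvG := invertibleOfNonzero (aux_inv G)
  set E := Representation.linHom ρ ρ with hE
  have hEid : ∀ g, E g LinearMap.id = LinearMap.id := by
    intro g
    rw [hE, Representation.linHom_apply]
    ext v
    simp
  have hG1 : Module.finrank ℂ E.invariants = 1 := by
    have h1 := Representation.card_inv_mul_sum_char_eq_finrank E
    have h2 := (aux_simple_iff ρ).1 hρ
    rw [← Nat.cast_inj (R := ℂ), ← h1, Nat.cast_one, inv_mul_eq_one₀ (aux_inv G), ← h2]
    refine Finset.sum_congr rfl fun g _ => ?_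
    rw [hE, Representation.char_linHom, mul_comm]
  have hid0 : (LinearMap.id : V →ₗ[ℂ] V) ≠ 0 := by
    intro h0
    have hsub : Subsingleton (V →ₗ[ℂ] V) := by
      refine ⟨fun a b => ?_⟩
      have : ∀ a : V →ₗ[ℂ] V, a = 0 := fun a => by
        rw [← LinearMap.comp_id a, h0, LinearMap.comp_zero]
      rw [this a, this b]
    have : Module.finrank ℂ E.invariants = 0 := Module.finrank_zero_of_subsingleton
    omega
  -- G-invariants are scalars
  have hGs : ∀ f, (∀ g, E g f = f) → ∃ c : ℂ, c • LinearMap.id = f := by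
    intro f hf
    have := (finrank_eq_one_iff_of_nonzero'
      (⟨LinearMap.id, hEid⟩ : E.invariants) (fun h => hid0 (congrArg Subtype.val h))).1 hG1 ⟨f, hf⟩
    obtain ⟨c, hc⟩ := this
    exact ⟨c, congrArg Subtype.val hc⟩
  constructor
  · intro h1 i hi
    obtain ⟨S, hS, hSα⟩ := hirr i
    apply hnp i
    rw [← hSα]
    apply aux_triv S hS
    have hc : charInner G E.character (Representation.character S.ρ) ≠ 0 := by
      have := hconst i
      rwa [← hSα] at this
    change charInner G (fun _ => 1) (Representation.character S.ρ) ≠ 0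
    rw [aux_inner, Nat.cast_ne_zero, ← Nat.pos_iff_ne_zero,
      Module.finrank_pos_iff_exists_ne_zero] at hc
    obtain ⟨f, hf⟩ := hc
    rw [← aux_trivchar, aux_inner, Nat.cast_ne_zero, ← Nat.pos_iff_ne_zero,
      Module.finrank_pos_iff_exists_ne_zero]
    have hSN : ∀ n ∈ N, ∀ v, S.ρ n v = v := by
      rw [← hSα] at hi
      exact aux_ker S.ρ N hi
    have hsc : ∀ v, ∃ c : ℂ, c • LinearMap.id = f v := by
      intro v
      obtain ⟨c, hc⟩ := (finrank_eq_one_iff_of_nonzero'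
        (⟨LinearMap.id, fun n => hEid n⟩ : Representation.invariants (E.comp N.subtype))
        (fun h => hid0 (congrArg Subtype.val h))).1 h1
        ⟨f v, fun n => by
          change E n (f v) = f v
          rw [← Representation.IntertwiningMap.isIntertwining, hSN n n.2]⟩
      exact ⟨c, congrArg Subtype.val hc⟩
    obtain ⟨v0, hv0⟩ : ∃ v, f v ≠ 0 := by
      by_contra! h
      exact hf (DFunLike.ext _ _ h)
    -- a functional which is nonzero on `f v0`
    obtain ⟨l, hl⟩ : ∃ l : Module.Dual ℂ (V →ₗ[ℂ] V), l (f v0) ≠ 0 := by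
      by_contra! h
      exact hv0 ((Module.forall_dual_apply_eq_zero_iff ℂ _).1 h)
    refine ⟨⟨l ∘ₗ f.toLinearMap, ?_⟩, ?_⟩
    · intro g
      ext v
      change l (f (S.ρ g v)) = l (f v)
      obtain ⟨c, hc⟩ := hsc v
      rw [Representation.IntertwiningMap.isIntertwining, ← hc, map_smul, hEid]
    · intro h0
      apply hl
      have := DFunLike.congr_fun h0 v0
      exact this
  · intro h
    by_contra hd
    -- find a non-scalar N-invariant
    obtain ⟨w, hwN, hws⟩ : ∃ w, (∀ n ∈ N, E n w = w) ∧ ∀ c : ℂ, c • LinearMap.id ≠ w := by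
      by_contra! hcon
      apply hd
      refine (finrank_eq_one_iff_of_nonzero'
        (⟨LinearMap.id, fun n => hEid n⟩ : Representation.invariants (E.comp N.subtype))
        (fun h => hid0 (congrArg Subtype.val h))).2 ?_
      rintro ⟨w, hw⟩
      obtain ⟨c, hc⟩ := hcon w fun n hn => hw ⟨n, hn⟩
      exact ⟨c, Subtype.ext hc⟩
    let C : Subrepresentation E :=
      { toSubmodule := ℂ ∙ (LinearMap.id : V →ₗ[ℂ] V)
        apply_mem_toSubmodule := by
          intro g v hv
          obtain ⟨c, rfl⟩ := Submodule.mem_span_singleton.1 hv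
          rw [map_smul, hEid]
          exact hv }
    have : NeZero (Nat.card G : ℂ) := ⟨aux_inv G⟩
    have hss : Representation.IsSemisimpleRepresentation E := inferInstance
    obtain ⟨Q, hQ⟩ := exists_isCompl C
    let W : Subrepresentation E :=
      { toSubmodule := Q.toSubmodule ⊓ (Representation.invariants (E.comp N.subtype))
        apply_mem_toSubmodule := by
          rintro g v ⟨hv, hv2⟩
          refine ⟨Q.apply_mem_toSubmodule g hv, fun n => ?_⟩
          change E n (E g v) = E g v
          have h3 : E (g⁻¹ * n * g) v = v := hv2 ⟨g⁻¹ * n * g, by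
            simpa using hN.conj_mem n n.2 g⁻¹⟩
          conv_rhs => rw [← h3]
          rw [← Module.End.mul_apply, ← Module.End.mul_apply, ← map_mul, ← map_mul]
          congr 2
          group }
    have hW : W ≠ ⊥ := by
      intro hW
      have htop : w ∈ (C ⊔ Q).toSubmodule := by
        rw [hQ.sup_eq_top]
        trivial
      rw [Subrepresentation.toSubmodule_sup, Submodule.mem_sup] at htop
      obtain ⟨y, hy, z, hz, hyz⟩ := htop
      obtain ⟨c, rfl⟩ := Submodule.mem_span_singleton.1 hy
      have hzW : z ∈ W.toSubmodule := by
        refine ⟨hz, fun n => ?_⟩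
        change E n z = z
        have : z = w - c • LinearMap.id := by rw [← hyz]; abel
        rw [this, map_sub, hwN n n.2, map_smul, hEid]
      rw [hW] at hzW
      have hz0 : z = 0 := (Submodule.mem_bot ℂ).1 hzW
      apply hws c
      rw [← hyz, hz0, add_zero]
    obtain ⟨S, hSW, hS0, hSirr⟩ := aux_exists E W hW
    have hSsimple : CategoryTheory.Simple (FDRep.of S.toRepresentation) := by
      rw [aux_simple_iff]
      have h1 := Representation.card_inv_mul_sum_char_mul_char_eq_finrank
        S.toRepresentation S.toRepresentation
      rw [Representation.IsIrreducible.finrank_intertwiningMap_self, Nat.cast_one,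
        inv_mul_eq_one₀ (aux_inv G)] at h1
      exact h1.symm
    obtain ⟨s, hs, hs0⟩ : ∃ s ∈ S.toSubmodule, s ≠ 0 := by
      by_contra! hcon
      apply hS0
      apply Subrepresentation.toSubmodule_injective
      exact eq_bot_iff.2 fun x hx => (Submodule.mem_bot ℂ).2 (hcon x hx)
    have hne : S.toRepresentation.character ≠ fun _ => 1 := by
      intro h1
      have h2 := Representation.card_inv_mul_sum_char_eq_finrank S.toRepresentation
      rw [h1] at h2
      simp only [Finset.sum_const, Finset.card_univ, nsmul_eq_mul, mul_one] at h2
      rw [← Nat.card_eq_fintype_card, inv_mul_cancel₀ (aux_inv G)] at h2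
      have h3 : 0 < Module.finrank ℂ S.toRepresentation.invariants := by
        have : Module.finrank ℂ S.toRepresentation.invariants = 1 := by exact_mod_cast h2.symm
        omega
      have h4 : S.toRepresentation.invariants ≠ ⊥ := by
        intro h5
        rw [h5, finrank_bot] at h3
        exact lt_irrefl _ h3
      obtain ⟨x, hx, hx0⟩ := Submodule.exists_mem_ne_zero_of_ne_bot h4
      obtain ⟨c, hc⟩ := hGs x fun g => congrArg Subtype.val (hx g)
      have hxC : (x : V →ₗ[ℂ] V) ∈ (C ⊓ Q).toSubmodule :=
        ⟨Submodule.mem_span_singleton.2 ⟨c, hc⟩, (hSW x.2).1⟩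
      rw [hQ.inf_eq_bot] at hxC
      apply hx0
      apply Subtype.ext
      exact (Submodule.mem_bot ℂ).1 hxC
    have hin : charInner G E.character S.toRepresentation.character ≠ 0 := by
      rw [aux_inner, Nat.cast_ne_zero, ← Nat.pos_iff_ne_zero,
        Module.finrank_pos_iff_exists_ne_zero]
      refine ⟨⟨S.toSubmodule.subtype, fun g => rfl⟩, fun h0 => hs0 ?_⟩
      exact DFunLike.congr_fun h0 ⟨s, hs⟩
    obtain ⟨i, hi⟩ := hall S.toRepresentation.character ⟨_, hSsimple, rfl⟩ hne hin
    apply h i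
    rw [← hi]
    intro n hn
    change S.toRepresentation.character n = S.toRepresentation.character 1
    have : S.toRepresentation n = S.toRepresentation 1 := by
      ext1 x
      apply Subtype.ext
      have h2 := (hSW x.2).2 ⟨n, hn⟩
      rw [map_one]
      exact h2
    rw [Representation.character, this, Representation.character]

/-- `χ_N` is irreducible iff `N` lies in no kernel of a non-principal irreducible
constituent of `χ ⬝ conj χ`. -/
theorem restriction_irreducible_iff (G : Type) [Group G] [Fintype G] (χ : G → ℂ)
    (hχ : IsIrrChar G χ) (n : ℕ) (α : Fin n → (G → ℂ)) (hinj : Function.Injective α)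
    (hirr : ∀ i, IsIrrChar G (α i)) (hnp : ∀ i, α i ≠ fun _ => 1)
    (hconst : ∀ i, charInner G (fun g => χ g * (starRingEnd ℂ) (χ g)) (α i) ≠ 0)
    (hall : ∀ β : G → ℂ, IsIrrChar G β → β ≠ (fun _ => 1) →
      charInner G (fun g => χ g * (starRingEnd ℂ) (χ g)) β ≠ 0 → ∃ i, β = α i)
    (N : Subgroup G) (hN : N.Normal) :
    IsIrrChar ↥N (fun x => χ x) ↔ ∀ i, ¬ ((N : Set G) ⊆ charKer G (α i)) := by
  obtain ⟨V, hV, rfl⟩ := hχ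
  exact aux_main V.ρ hV n α hirr hnp hconst hall N hN
end

section
/- Let G be a finite group, χ ∈ Irr(G), N normal in G, and suppose some non-principal irreducible constituent α of χ·conj(χ) satisfies N ≤ Ker(α). Then [χ_N, χ_N] ≥ 1 + a·α(1) > 1, where a = [χ·conj(χ), α]; in particular χ_N is reducible. -/
open scoped Classical BigOperators

open scoped ComplexOrder in
theorem aux_conj {G : Type} [Group G] [Fintype G] {V : Type} [AddCommGroup V] [Module ℂ V]
    [FiniteDimensional ℂ V] (ρ : Representation ℂ G V) (g : G) :
    LinearMap.trace ℂ V (ρ g⁻¹) = (starRingEnd ℂ) (LinearMap.trace ℂ V (ρ g)) := by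
  let b := Module.finBasis ℂ V
  let M : G →* Matrix (Fin (Module.finrank ℂ V)) (Fin (Module.finrank ℂ V)) ℂ :=
    { toFun := fun g => LinearMap.toMatrix b b (ρ g)
      map_one' := by rw [map_one]; exact LinearMap.toMatrix_one b
      map_mul' := fun x y => by rw [map_mul]; exact LinearMap.toMatrix_mul b _ _ }
  have hM : ∀ x, LinearMap.trace ℂ V (ρ x) = (M x).trace := fun x =>
    LinearMap.trace_eq_matrix_trace ℂ b (ρ x)
  rw [hM, hM]
  let H := ∑ x : G, (M x).conjTranspose * M x
  have hH : H.PosDef := by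
    have : H = 1 + ∑ x ∈ Finset.univ.erase (1 : G), (M x).conjTranspose * M x := by
      rw [show H = _ from (Finset.add_sum_erase Finset.univ _ (Finset.mem_univ (1:G))).symm]
      simp
    rw [this]
    exact Matrix.PosDef.one.add_posSemidef
      (Matrix.posSemidef_sum _ fun x _ => Matrix.posSemidef_conjTranspose_mul_self (M x))
  have hu := (Matrix.isUnit_iff_isUnit_det H).1 hH.isUnit
  have hinv : (M g).conjTranspose * H * M g = H := by
    simp only [H, Finset.mul_sum, Finset.sum_mul]
    refine Fintype.sum_equiv (Equiv.mulRight g) _ _ fun x => ?_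
    simp [Matrix.mul_assoc]
  have h2 : (M g).conjTranspose * H = H * M g⁻¹ := by
    have : (M g).conjTranspose * H * M g * M g⁻¹ = H * M g⁻¹ := by rw [hinv]
    rwa [Matrix.mul_assoc, ← map_mul, mul_inv_cancel, map_one, Matrix.mul_one] at this
  have h3 : M g⁻¹ = H⁻¹ * ((M g).conjTranspose * H) := by
    rw [h2, ← Matrix.mul_assoc, Matrix.nonsing_inv_mul _ hu, Matrix.one_mul]
  rw [h3, Matrix.trace_mul_comm, Matrix.mul_assoc, Matrix.mul_nonsing_inv _ hu, Matrix.mul_one,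
    Matrix.trace_conjTranspose]
  rfl

theorem aux_schur {G : Type} [Group G] [Fintype G] (A : FDRep ℂ G) [CategoryTheory.Simple A]
    (f : A →ₗ[ℂ] A) (hf : ∀ g, A.ρ g * f = f * A.ρ g) : ∃ c : ℂ, f = c • 1 := by
  have h1 : Module.finrank ℂ (Representation.linHom A.ρ A.ρ).invariants = 1 := by
    rw [(Representation.linHom.invariantsEquivFDRepHom A A).finrank_eq]
    exact CategoryTheory.finrank_endomorphism_simple_eq_one ℂ A
  have hm : ∀ f : A →ₗ[ℂ] A, (∀ g, A.ρ g * f = f * A.ρ g) →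
      f ∈ (Representation.linHom A.ρ A.ρ).invariants := by
    intro f hf g
    rw [Representation.linHom_apply]
    change A.ρ g * (f * A.ρ g⁻¹) = f
    rw [← mul_assoc, hf, mul_assoc, ← map_mul, mul_inv_cancel, map_one, mul_one]
  have hone : (1 : A →ₗ[ℂ] A) ≠ 0 := by
    intro h
    have hz : ∀ f : A →ₗ[ℂ] A, f = 0 := fun f => by rw [← mul_one f, h, mul_zero]
    have : Subsingleton (Representation.linHom A.ρ A.ρ).invariants :=
      ⟨fun x y => Subtype.ext ((hz x.1).trans (hz y.1).symm)⟩
    rw [Module.finrank_zero_of_subsingleton] at h1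
    exact zero_ne_one h1
  obtain ⟨c, hc⟩ := (finrank_eq_one_iff_of_nonzero'
    (⟨1, hm 1 (fun g => by simp)⟩ : (Representation.linHom A.ρ A.ρ).invariants)
    (fun h => hone (congrArg Subtype.val h))).1 h1 ⟨f, hm f hf⟩
  exact ⟨c, (congrArg Subtype.val hc).symm⟩

theorem aux_kernel {N : Type} [Group N] [Fintype N] {V : Type} [AddCommGroup V] [Module ℂ V]
    [FiniteDimensional ℂ V] (ρ : Representation ℂ N V)
    (h : ∀ n, LinearMap.trace ℂ V (ρ n) = LinearMap.trace ℂ V (ρ 1)) (n : N) : ρ n = 1 := by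
  have : Invertible (Nat.card N : ℂ) := invertibleOfNonzero (by simp)
  have h1 := ρ.card_inv_mul_sum_char_eq_finrank
  simp only [Representation.character, h] at h1
  rw [map_one, LinearMap.trace_one] at h1
  simp at h1
  have h2 := Submodule.eq_top_of_finrank_eq h1.symm
  ext v
  have : v ∈ ρ.invariants := h2 ▸ Submodule.mem_top
  exact this n

theorem aux_idem {V : Type} [AddCommGroup V] [Module ℂ V]
    [FiniteDimensional ℂ V] (e : Module.End ℂ V) (he : e * e = e) :
    0 ≤ (LinearMap.trace ℂ V e).re := by
  rw [(LinearMap.IsIdempotentElem.isProj_range e he).trace]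
  simp

/-- Idempotent algebra. -/
theorem aux_alg {G : Type} [Group G] [Fintype G] {E : Type} [Ring E] [Algebra ℂ E]
    (R : G →* E) (N : Subgroup G) (α : G → ℂ) (d : ℂ) (hd : d ≠ 0)
    (hconv : ∀ h, ∑ g, (starRingEnd ℂ) (α g) * α (g * h) = (Fintype.card G : ℂ) / d * α h)
    (hdr : (starRingEnd ℂ) d = d)
    (hinv : ∀ g, α g⁻¹ = (starRingEnd ℂ) (α g))
    (hsum : ∑ g, (starRingEnd ℂ) (α g) = 0)
    (hr : ∀ g, ∀ n ∈ N, α (g * n) = α g) (hl : ∀ g, ∀ n ∈ N, α (n * g) = α g)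
    (P P1 Pa : E) (hP : P = (Fintype.card N : ℂ)⁻¹ • ∑ n : N, R n)
    (hP1 : P1 = (Fintype.card G : ℂ)⁻¹ • ∑ g, R g)
    (hPa : Pa = (d / Fintype.card G) • ∑ g, (starRingEnd ℂ) (α g) • R g) :
    (P - P1 - Pa) * (P - P1 - Pa) = P - P1 - Pa := by
  have hG : (Fintype.card G : ℂ) ≠ 0 := by simp
  have hNc : (Fintype.card N : ℂ) ≠ 0 := by simp
  have a1 : ∀ g, R g * P1 = P1 := by
    intro g
    rw [hP1, mul_smul_comm, Finset.mul_sum]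
    congr 1
    exact Fintype.sum_equiv (Equiv.mulLeft g) _ _ fun x => by simp
  have a2 : ∀ g, P1 * R g = P1 := by
    intro g
    rw [hP1, smul_mul_assoc, Finset.sum_mul]
    congr 1
    exact Fintype.sum_equiv (Equiv.mulRight g) _ _ fun x => by simp
  have b1 : ∀ g ∈ N, R g * Pa = Pa := by
    intro g hg
    rw [hPa, mul_smul_comm, Finset.mul_sum]
    congr 1
    exact Fintype.sum_equiv (Equiv.mulLeft g) _ _ fun x => by simp [hl _ _ hg]
  have b2 : ∀ g ∈ N, Pa * R g = Pa := by
    intro g hg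
    rw [hPa, smul_mul_assoc, Finset.sum_mul]
    congr 1
    exact Fintype.sum_equiv (Equiv.mulRight g) _ _ fun x => by simp [hr _ _ hg]
  have c1 : ∀ g ∈ N, R g * P = P := by
    intro g hg
    rw [hP, mul_smul_comm, Finset.mul_sum]
    congr 1
    exact Fintype.sum_equiv (Equiv.mulLeft (⟨g, hg⟩ : N)) _ _ fun x => by simp
  have L : ∀ X, (∀ g ∈ N, R g * X = X) → P * X = X := by
    intro X hX
    rw [hP, smul_mul_assoc, Finset.sum_mul, Finset.sum_congr rfl (fun n _ => hX n.1 n.2)]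
    simp [← Nat.cast_smul_eq_nsmul ℂ, smul_smul, hNc]
  have L' : ∀ X, (∀ g ∈ N, X * R g = X) → X * P = X := by
    intro X hX
    rw [hP, mul_smul_comm, Finset.mul_sum, Finset.sum_congr rfl (fun n _ => hX n.1 n.2)]
    simp [← Nat.cast_smul_eq_nsmul ℂ, smul_smul, hNc]
  have e1 : P * P = P := L P c1
  have e2 : P * P1 = P1 := L P1 fun g _ => a1 g
  have e3 : P1 * P = P1 := L' P1 fun g _ => a2 g
  have e4 : P * Pa = Pa := L Pa b1
  have e5 : Pa * P = Pa := L' Pa b2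
  have e6 : P1 * P1 = P1 := by
    conv_lhs => enter [1]; rw [hP1]
    rw [smul_mul_assoc, Finset.sum_mul, Finset.sum_congr rfl (fun n _ => a1 n)]
    simp [← Nat.cast_smul_eq_nsmul ℂ, smul_smul, hG]
  have e7 : Pa * P1 = 0 := by
    rw [hPa, smul_mul_assoc, Finset.sum_mul]
    simp_rw [smul_mul_assoc, a1]
    rw [← Finset.sum_smul, hsum, zero_smul, smul_zero]
  have e8 : P1 * Pa = 0 := by
    rw [hPa, mul_smul_comm, Finset.mul_sum]
    simp_rw [mul_smul_comm, a2]
    rw [← Finset.sum_smul, hsum, zero_smul, smul_zero]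
  have e9 : Pa * Pa = Pa := by
    have key : (∑ g, (starRingEnd ℂ) (α g) • R g) * (∑ g, (starRingEnd ℂ) (α g) • R g)
        = ((Fintype.card G : ℂ) / d) • ∑ g, (starRingEnd ℂ) (α g) • R g := by
      rw [Finset.sum_mul_sum]
      have : ∀ g, ∑ h, ((starRingEnd ℂ) (α g) • R g) * ((starRingEnd ℂ) (α h) • R h)
          = ∑ k, ((starRingEnd ℂ) (α g) * (starRingEnd ℂ) (α (g⁻¹ * k))) • R k := by
        intro g
        exact Fintype.sum_equiv (Equiv.mulLeft g) _ _ fun x => by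
          simp [smul_smul, mul_comm]
      rw [Finset.sum_congr rfl (fun g _ => this g), Finset.sum_comm, Finset.smul_sum]
      refine Finset.sum_congr rfl fun k _ => ?_
      rw [← Finset.sum_smul, smul_smul]
      congr 1
      have h := congrArg (starRingEnd ℂ) (hconv k)
      simp only [map_sum, map_mul, map_div₀, hdr, map_natCast, Complex.conj_conj] at h
      rw [← h]
      exact Fintype.sum_equiv (Equiv.inv G) _ _ fun x => by simp [hinv]
    rw [hPa, smul_mul_smul_comm, key, smul_smul]
    congr 1
    field_simp
  simp only [sub_mul, mul_sub, e1, e2, e3, e4, e5, e6, e7, e8, e9]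
  abel

theorem aux_irr_norm (G : Type) [Group G] [Fintype G] (χ : G → ℂ) (h : IsIrrChar G χ) :
    charInner G χ χ = 1 := by
  obtain ⟨V, hV, rfl⟩ := h
  have h1 := (FDRep.simple_iff_char_is_norm_one V).1 hV
  have h2 : ∀ g, (starRingEnd ℂ) (V.character g) = V.character g⁻¹ := fun g =>
    (aux_conj V.ρ g).symm
  simp only [charInner, h2, h1]
  simp

theorem restriction_reducible_of_kernel (G : Type) [Group G] [Fintype G] (χ : G → ℂ)
    (hχ : IsIrrChar G χ) (N : Subgroup G) (hN : N.Normal) (α : G → ℂ)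
    (hα : IsIrrChar G α) (hnp : α ≠ fun _ => 1)
    (hconst : charInner G (fun g => χ g * (starRingEnd ℂ) (χ g)) α ≠ 0)
    (hker : (N : Set G) ⊆ charKer G α) :
    1 + (charInner G (fun g => χ g * (starRingEnd ℂ) (χ g)) α).re * (α 1).re
        ≤ (charInner ↥N (fun x => χ x) (fun x => χ x)).re ∧
    1 < (charInner ↥N (fun x => χ x) (fun x => χ x)).re ∧
    ¬ IsIrrChar ↥N (fun x => χ x) := by
  have hG : (Fintype.card G : ℂ) ≠ 0 := by simp
  have hχn := aux_irr_norm G χ hχ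
  have hαn := aux_irr_norm G α hα
  obtain ⟨V, hV, hVχ⟩ := hχ
  obtain ⟨A, hA, hAα⟩ := hα
  have hχc : ∀ g, χ g⁻¹ = (starRingEnd ℂ) (χ g) := fun g => by
    rw [← hVχ]; exact aux_conj V.ρ g
  have hαc : ∀ g, α g⁻¹ = (starRingEnd ℂ) (α g) := fun g => by
    rw [← hAα]; exact aux_conj A.ρ g
  have hαt : ∀ g, LinearMap.trace ℂ A (A.ρ g) = α g := fun g => by rw [← hAα]; rfl
  have hα1 : α 1 = (Module.finrank ℂ A : ℂ) := by rw [← hAα]; exact A.char_one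
  have hαsq : ∑ g, (starRingEnd ℂ) (α g) * α g = Fintype.card G := by
    unfold charInner at hαn
    rw [inv_mul_eq_one₀ hG] at hαn
    rw [hαn]
    exact Finset.sum_congr rfl fun g _ => mul_comm _ _
  -- degree is nonzero
  have hone : ∀ g, α g ≠ 0 → α 1 ≠ 0 := by
    intro g hg h0
    rw [hα1, Nat.cast_eq_zero] at h0
    have : Subsingleton A := Module.finrank_zero_iff.1 h0
    apply hg
    rw [← hαt, Subsingleton.elim (A.ρ g) 0, map_zero]
  have hd : α 1 ≠ 0 := by
    intro h0
    have : ∀ g, α g = 0 := fun g => by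
      by_contra hg
      exact hone g hg h0
    simp only [this, mul_zero, Finset.sum_const_zero] at hαsq
    exact hG hαsq.symm
  have hdr : (starRingEnd ℂ) (α 1) = α 1 := by rw [hα1]; simp
  have hcomm : ∀ g h, α (g * h) = α (h * g) := fun g h => by
    rw [← hAα]; exact A.char_mul_comm h g
  -- convolution
  have hconv : ∀ h, ∑ g, (starRingEnd ℂ) (α g) * α (g * h)
      = (Fintype.card G : ℂ) / α 1 * α h := by
    obtain ⟨c, hc⟩ := aux_schur A (∑ g, (starRingEnd ℂ) (α g) • A.ρ g) (by
      intro h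
      rw [Finset.mul_sum, Finset.sum_mul]
      refine Fintype.sum_equiv (MulAut.conj h).toEquiv _ _ fun x => ?_
      have : α (h * x * h⁻¹) = α x := by rw [← hAα]; exact A.char_conj x h
      simp only [MulEquiv.toEquiv_eq_coe, EquivLike.coe_coe, MulAut.conj_apply, this,
        mul_smul_comm, smul_mul_assoc, ← map_mul]
      simp)
    have hh : ∀ h, ∑ g, (starRingEnd ℂ) (α g) * α (g * h) = c * α h := by
      intro h
      have := congrArg (fun f => LinearMap.trace ℂ A (f * A.ρ h)) hc
      simpa [Finset.sum_mul, smul_mul_assoc, ← map_mul, hαt] using this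
    have h1 := hh 1
    simp only [mul_one, hαsq] at h1
    intro h
    rw [hh, h1, mul_div_cancel_right₀ _ hd]
  -- sum vanishes
  have hsum' : ∑ g, α g = 0 := by
    by_contra hs
    obtain ⟨c, hc⟩ := aux_schur A (∑ g, A.ρ g) (by
      intro h
      rw [Finset.mul_sum, Finset.sum_mul]
      refine Fintype.sum_equiv (MulAut.conj h).toEquiv _ _ fun x => ?_
      simp [← map_mul])
    have hc0 : c ≠ 0 := by
      rintro rfl
      apply hs
      have := congrArg (LinearMap.trace ℂ A) hc
      simpa [hαt] using this
    have htriv : ∀ h, α h = α 1 := by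
      intro h
      have h1 : A.ρ h * ∑ g, A.ρ g = ∑ g, A.ρ g := by
        rw [Finset.mul_sum]
        exact Fintype.sum_equiv (Equiv.mulLeft h) _ _ fun x => by simp
      rw [hc] at h1
      have := congrArg (LinearMap.trace ℂ A) h1
      simp only [mul_smul_comm, mul_one, map_smul, hαt, smul_eq_mul] at this
      have h2 := mul_left_cancel₀ hc0 this
      rw [h2, LinearMap.trace_one, hα1]
    simp only [htriv, hdr, Finset.sum_const, Finset.card_univ, nsmul_eq_mul] at hαsq
    have h3 : α 1 * α 1 = 1 := mul_left_cancel₀ hG (by rw [hαsq, mul_one])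
    have h4 : α 1 = 1 := by
      rw [hα1] at h3 ⊢
      norm_cast at h3 ⊢
      exact Nat.eq_one_of_mul_eq_one_left h3
    exact hnp (funext fun g => (htriv g).trans h4)
  have hsum : ∑ g, (starRingEnd ℂ) (α g) = 0 := by
    rw [← map_sum, hsum', map_zero]
  -- kernel
  have hk : ∀ n ∈ N, A.ρ n = 1 := fun n hn =>
    aux_kernel (A.ρ.comp N.subtype) (fun m => by
      have := hker m.2
      simp only [charKer, Set.mem_ofPred_eq] at this
      simpa [hαt] using (hαt m.1).trans (this.trans (hαt 1).symm)) ⟨n, hn⟩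
  have hr : ∀ g, ∀ n ∈ N, α (g * n) = α g := by
    intro g n hn
    rw [← hαt, map_mul, hk n hn, mul_one, hαt]
  have hl : ∀ g, ∀ n ∈ N, α (n * g) = α g := by
    intro g n hn
    rw [← hαt, map_mul, hk n hn, one_mul, hαt]
  -- the representation on End V
  let R : Representation ℂ G (V →ₗ[ℂ] V) := Representation.linHom V.ρ V.ρ
  have hR : ∀ g, LinearMap.trace ℂ _ (R g) = χ g * (starRingEnd ℂ) (χ g) := by
    intro g
    have := Representation.char_linHom V.ρ V.ρ g
    rw [mul_comm, ← hχc, ← hVχ]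
    exact this
  have hidem := aux_idem _ (aux_alg R N α (α 1) hd hconv hdr hαc hsum hr hl _ _ _ rfl rfl rfl)
  have hmain : 1 + (charInner G (fun g => χ g * (starRingEnd ℂ) (χ g)) α).re * (α 1).re
        ≤ (charInner ↥N (fun x => χ x) (fun x => χ x)).re := by
    have t1 : LinearMap.trace ℂ _ ((Fintype.card N : ℂ)⁻¹ • ∑ n : N, R n)
        = charInner ↥N (fun x => χ x) (fun x => χ x) := by
      simp [charInner, hR]
    have t2 : LinearMap.trace ℂ _ ((Fintype.card G : ℂ)⁻¹ • ∑ g, R g) = 1 := by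
      rw [← hχn]
      simp [charInner, hR]
    have t3 : LinearMap.trace ℂ _ ((α 1 / Fintype.card G) • ∑ g, (starRingEnd ℂ) (α g) • R g)
        = charInner G (fun g => χ g * (starRingEnd ℂ) (χ g)) α * α 1 := by
      simp only [charInner, hR, map_smul, map_sum, smul_eq_mul]
      rw [div_eq_mul_inv, mul_comm (_ * _) (α 1), mul_assoc (α 1)]
      congr 2
      exact Finset.sum_congr rfl fun g _ => mul_comm _ _
    rw [map_sub, map_sub, t1, t2, t3] at hidem
    have him : (α 1).im = 0 := by rw [hα1]; simp
    simp only [Complex.sub_re, Complex.mul_re, Complex.one_re, him] at hidem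
    linarith
  have hpos : 0 < (charInner G (fun g => χ g * (starRingEnd ℂ) (χ g)) α).re * (α 1).re := by
    have : Invertible (Nat.card G : ℂ) := invertibleOfNonzero (by simp)
    have h1 := Representation.card_inv_mul_sum_char_mul_char_eq_finrank A.ρ R
    have h2 : charInner G (fun g => χ g * (starRingEnd ℂ) (χ g)) α
        = (Module.finrank ℂ (Representation.IntertwiningMap A.ρ R) : ℂ) := by
      rw [← h1, charInner, Nat.card_eq_fintype_card]
      congr 1
      refine Finset.sum_congr rfl fun g _ => ?_
      rw [← hαc, ← hR, ← hαt]
      rfl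
    rw [h2] at hconst ⊢
    rw [hα1] at hd ⊢
    rw [Complex.natCast_re, Complex.natCast_re]
    norm_cast at hconst hd ⊢
    positivity
  have hlt : 1 < (charInner ↥N (fun x => χ x) (fun x => χ x)).re := by linarith
  refine ⟨hmain, hlt, fun hirr => ?_⟩
  rw [aux_irr_norm _ _ hirr] at hlt
  simp at hlt
end

section
/- Let G be a finite solvable group and χ ∈ Irr(G) with χ(1) > 1. Let α_1, …, α_n be the distinct non-principal irreducible constituents of χ·conj(χ). If Ker(α_j) is maximal under inclusion among the subgroups Ker(α_1), …, Ker(α_n), then the multiplicity [χ·conj(χ), α_j] = 1. In particular, some non-principal irreducible constituent of χ·conj(χ) occurs with multiplicity exactly 1. -/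
open scoped Classical BigOperators

section MultOneAux
open Module

theorem eigbasis {V : Type} [AddCommGroup V] [Module ℂ V] [FiniteDimensional ℂ V]
    (A : V →ₗ[ℂ] V) (m : ℕ) (hm : 0 < m) (hA : A ^ m = 1) :
    ∃ (ι : Type) (_ : Fintype ι) (b : Basis ι ℂ V) (μ : ι → ℂ),
      (∀ i, A (b i) = μ i • b i) ∧ ∀ i, ‖μ i‖ = 1 := by
  have hs : Module.End.IsSemisimple A := by
    apply Module.End.isSemisimple_of_squarefree_aeval_eq_zero (p := Polynomial.X ^ m - Polynomial.C 1)
    · exact (Polynomial.separable_X_pow_sub_C (1:ℂ) (by exact_mod_cast hm.ne') one_ne_zero).squarefree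
    · simp [hA]
  have ht := hs.iSup_eigenspace_eq_top
  have hint := DirectSum.isInternal_submodule_of_iSupIndep_of_iSup_eq_top (Module.End.eigenspaces_iSupIndep A) ht
  let b := hint.collectedBasis (fun μ => Module.finBasis ℂ (Module.End.eigenspace A μ))
  have hf : Finite (Σ μ : ℂ, Fin (finrank ℂ (Module.End.eigenspace A μ))) := Module.Finite.finite_basis b
  have hb : ∀ i, A (b i) = i.1 • b i := by
    intro i
    have := hint.collectedBasis_mem (fun μ => Module.finBasis ℂ (Module.End.eigenspace A μ)) i
    exact Module.End.mem_eigenspace_iff.1 this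
  refine ⟨_, Fintype.ofFinite _, b, fun i => i.1, hb, ?_⟩
  intro i
  have h1 : ∀ k : ℕ, (A ^ k) (b i) = i.1 ^ k • b i := by
    intro k
    induction k with
    | zero => simp
    | succ k ih => rw [pow_succ', Module.End.mul_apply, ih, map_smul, hb, smul_smul, pow_succ]
  have h2 := h1 m
  rw [hA] at h2
  have h3 : i.1 ^ m = 1 := by
    have : ((i.1 ^ m - 1) • b i) = 0 := by rw [sub_smul, ← h2]; simp
    rcases smul_eq_zero.1 this with h | h
    · exact sub_eq_zero.1 h
    · exact absurd h (b.ne_zero i)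
  exact Complex.norm_eq_one_of_pow_eq_one h3 hm.ne'

theorem trace_eig {V : Type} [AddCommGroup V] [Module ℂ V] {ι : Type} [Fintype ι] (b : Basis ι ℂ V)
   (A : V →ₗ[ℂ] V) (μ : ι → ℂ) (h : ∀ i, A (b i) = μ i • b i) : LinearMap.trace ℂ V A = ∑ i, μ i := by
  rw [LinearMap.trace_eq_matrix_trace ℂ b]
  simp [Matrix.trace, LinearMap.toMatrix_apply, h]

theorem trace_inv {V : Type} [AddCommGroup V] [Module ℂ V] [FiniteDimensional ℂ V]
    (A B : V →ₗ[ℂ] V) (m : ℕ) (hm : 0 < m) (hA : A ^ m = 1) (hB : B * A = 1) :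
    (starRingEnd ℂ) (LinearMap.trace ℂ V A) = LinearMap.trace ℂ V B := by
  obtain ⟨ι, _, b, μ, hb, hμ⟩ := eigbasis A m hm hA
  have h0 : ∀ i, μ i ≠ 0 := fun i h => by have := hμ i; simp [h] at this
  rw [trace_eig b A μ hb, trace_eig b B (fun i => (μ i)⁻¹), map_sum]
  · refine Finset.sum_congr rfl fun i _ => ?_
    exact (Complex.inv_eq_conj (hμ i)).symm
  · intro i
    have : B (A (b i)) = b i := by rw [← Module.End.mul_apply, hB]; rfl
    rw [hb, map_smul] at this
    rw [eq_inv_smul_iff₀ (h0 i), this]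

theorem eq_one_of_trace {V : Type} [AddCommGroup V] [Module ℂ V] [FiniteDimensional ℂ V]
    (A : V →ₗ[ℂ] V) (m : ℕ) (hm : 0 < m) (hA : A ^ m = 1)
    (ht : LinearMap.trace ℂ V A = finrank ℂ V) : A = 1 := by
  obtain ⟨ι, _, b, μ, hb, hμ⟩ := eigbasis A m hm hA
  rw [trace_eig b A μ hb, finrank_eq_card_basis b] at ht
  have hle : ∀ i, (μ i).re ≤ 1 := fun i => (Complex.re_le_norm _).trans (hμ i).le
  have hs : ∑ i, (1 - (μ i).re) = 0 := by
    have := congrArg Complex.re ht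
    simp at this
    simp [this]
  have h1 := (Finset.sum_eq_zero_iff_of_nonneg (fun i _ => sub_nonneg.2 (hle i))).1 hs
  apply b.ext
  intro i
  have hr : (μ i).re = 1 := by linarith [h1 i (Finset.mem_univ i)]
  have : μ i = 1 := by
    have h2 := hμ i
    have h3 := Complex.sq_norm (μ i)
    rw [h2, Complex.normSq_apply, hr] at h3
    apply Complex.ext <;> simp [hr]; nlinarith
  rw [hb, this]; simp

namespace MultOne
set_option linter.unusedSectionVars false
open Representation

variable {G V W : Type} [Group G] [Fintype G] [AddCommGroup V] [Module ℂ V] [FiniteDimensional ℂ V]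
  [AddCommGroup W] [Module ℂ W] [FiniteDimensional ℂ W]

theorem exists_stable_compl (σ : Representation ℂ G V) (X : Submodule ℂ V)
    (hX : ∀ g, ∀ v ∈ X, σ g v ∈ X) :
    ∃ C : Submodule ℂ V, (∀ g, ∀ v ∈ C, σ g v ∈ C) ∧ IsCompl X C := by
  have : NeZero (Nat.card G : ℂ) := ⟨by exact_mod_cast Nat.card_pos.ne'⟩
  have : IsSemisimpleRepresentation σ := inferInstance
  obtain ⟨C, hC⟩ := exists_isCompl (⟨X, hX⟩ : Subrepresentation σ)
  refine ⟨C.toSubmodule, C.apply_mem_toSubmodule, ?_⟩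
  constructor
  · rw [disjoint_iff]
    have := congrArg Subrepresentation.toSubmodule (disjoint_iff.1 hC.1)
    exact this
  · rw [codisjoint_iff]
    have := congrArg Subrepresentation.toSubmodule (codisjoint_iff.1 hC.2)
    exact this

theorem stable_cases_of_scalar (σ : Representation ℂ G V)
    (hs : ∀ f : V →ₗ[ℂ] V, (∀ g v, f (σ g v) = σ g (f v)) → ∃ c : ℂ, f = c • LinearMap.id)
    (X : Submodule ℂ V) (hX : ∀ g, ∀ v ∈ X, σ g v ∈ X) : X = ⊥ ∨ X = ⊤ := by
  obtain ⟨C, hC, hc⟩ := exists_stable_compl σ X hX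
  obtain ⟨c, hc'⟩ := hs (X.projection C hc) (by
    intro g v
    obtain ⟨x, hx, y, hy, rfl⟩ := Submodule.mem_sup.1 (hc.sup_eq_top ▸ Submodule.mem_top : v ∈ X ⊔ C)
    rw [map_add, map_add, map_add,
      (Submodule.projection_apply_eq_zero_iff hc).2 hy,
      (Submodule.projection_apply_eq_zero_iff hc).2 (hC g y hy),
      Submodule.projection_eq_self_iff hc x |>.2 hx,
      Submodule.projection_eq_self_iff hc _ |>.2 (hX g x hx)]
    simp)
  by_cases h0 : c = 0
  · left
    rw [eq_bot_iff]
    intro x hx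
    have := Submodule.projection_eq_self_iff hc x |>.2 hx
    rw [hc', h0] at this
    simpa using this.symm
  · right
    rw [eq_top_iff]
    intro x _
    have h1 : X.projection C hc x ∈ X := Submodule.projection_apply_mem hc x
    rw [hc'] at h1
    exact (X.smul_mem_iff h0).1 h1

theorem scalar_of_finrank (σ : Representation ℂ G V) (h : finrank ℂ (linHom σ σ).invariants = 1)
    (f : V →ₗ[ℂ] V) (hf : ∀ g v, f (σ g v) = σ g (f v)) : ∃ c : ℂ, f = c • LinearMap.id := by
  have mem : ∀ f : V →ₗ[ℂ] V, (∀ g v, f (σ g v) = σ g (f v)) → f ∈ (linHom σ σ).invariants := by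
    intro f hf g
    ext v
    simp [linHom_apply, ← hf]
  by_cases h1 : (LinearMap.id : V →ₗ[ℂ] V) = 0
  · refine ⟨0, ?_⟩
    ext v
    have := LinearMap.congr_fun h1 v
    simp at this
    simp [this]
  · have := (finrank_eq_one_iff_of_nonzero' (⟨LinearMap.id, mem _ (by simp)⟩ : (linHom σ σ).invariants)
      (by intro h; exact h1 (congrArg Subtype.val h))).1 h ⟨f, mem f hf⟩
    obtain ⟨c, hc⟩ := this
    exact ⟨c, (congrArg Subtype.val hc).symm⟩

theorem exists_atom (σ : Representation ℂ G V) (X : Submodule ℂ V)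
    (hX : ∀ g, ∀ v ∈ X, σ g v ∈ X) (hne : X ≠ ⊥) :
    ∃ U : Submodule ℂ V, (∀ g, ∀ v ∈ U, σ g v ∈ U) ∧ U ≤ X ∧ U ≠ ⊥ ∧
      ∀ Y : Submodule ℂ V, (∀ g, ∀ v ∈ Y, σ g v ∈ Y) → Y ≤ U → Y ≠ ⊥ → Y = U := by
  let S : Set (Submodule ℂ V) := {U | (∀ g, ∀ v ∈ U, σ g v ∈ U) ∧ U ≤ X ∧ U ≠ ⊥}
  obtain ⟨U, hU, hmin⟩ := WellFounded.has_min (wellFounded_lt (α := Submodule ℂ V)) S ⟨X, hX, le_rfl, hne⟩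
  refine ⟨U, hU.1, hU.2.1, hU.2.2, ?_⟩
  intro Y hY hYU hne
  by_contra hcon
  exact hmin Y ⟨hY, hYU.trans hU.2.1, hne⟩ (lt_of_le_of_ne hYU hcon)

theorem exists_common_eigenvector (τ : Representation ℂ G V) (hV : Nontrivial V)
    (hcomm : ∀ x y v, τ x (τ y v) = τ y (τ x v)) :
    ∃ v : V, v ≠ 0 ∧ ∀ x, ∃ c : ℂ, τ x v = c • v := by
  obtain ⟨U, hU, -, hne, hmin⟩ := exists_atom τ ⊤ (by simp) top_ne_bot
  obtain ⟨v, hv, hv0⟩ := U.ne_bot_iff.1 hne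
  refine ⟨v, hv0, fun x => ?_⟩
  have : Nontrivial U := Submodule.nontrivial_iff_ne_bot.2 hne
  obtain ⟨c, hc⟩ := Module.End.exists_eigenvalue ((τ x).restrict (hU x))
  obtain ⟨u, hu⟩ := hc.exists_hasEigenvector
  have h1 : τ x u = c • (u : V) := congrArg Subtype.val hu.apply_eq_smul
  have := hmin (U ⊓ Module.End.eigenspace (τ x) c) (by
    rintro g w ⟨hw1, hw2⟩
    refine ⟨hU g w hw1, ?_⟩
    have hw2' := Module.End.mem_eigenspace_iff.1 hw2
    apply Module.End.mem_eigenspace_iff.2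
    rw [hcomm, hw2', map_smul]) inf_le_left (by
    intro h
    have h3 : (u : V) ∈ U ⊓ Module.End.eigenspace (τ x) c := ⟨u.2, Module.End.mem_eigenspace_iff.2 h1⟩
    rw [h] at h3
    exact hu.2 (Subtype.ext ((Submodule.mem_bot _).1 h3)))
  rw [← this] at hv
  exact ⟨c, Module.End.mem_eigenspace_iff.1 hv.2⟩

/-- The key bound on the multiplicity. -/
theorem finrank_le_one (L : Subgroup G) (ρ : Representation ℂ G V) (τ : Representation ℂ G W)
    (hW : Nontrivial W)
    (hirr : ∀ X : Submodule ℂ W, (∀ g, ∀ v ∈ X, τ g v ∈ X) → X = ⊥ ∨ X = ⊤)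
    (hs : ∀ f : V →ₗ[ℂ] V, (∀ g ∈ L, ∀ v, f (ρ g v) = ρ g (f v)) → ∃ c : ℂ, f = c • LinearMap.id)
    (hcomm : ∀ x ∈ L, ∀ y ∈ L, ∀ v, τ x (τ y v) = τ y (τ x v)) :
    finrank ℂ (IntertwiningMap τ (linHom ρ ρ)) ≤ 1 := by
  obtain ⟨w, hw0, hw⟩ := exists_common_eigenvector (τ.comp L.subtype) hW
    (fun x y v => hcomm x x.2 y y.2 v)
  choose c hc using hw
  have hc0 : ∀ x, c x ≠ 0 := by
    intro x h
    have h1 := hc x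
    rw [h, zero_smul] at h1
    have h2 : (τ.comp L.subtype) x⁻¹ ((τ.comp L.subtype) x w) = w := by simp
    rw [h1, map_zero] at h2
    exact hw0 h2.symm
  have hkey : ∀ (φ : IntertwiningMap τ (linHom ρ ρ)) (x : L) (v : V),
      ρ x (φ w v) = c x • φ w (ρ x v) := by
    intro φ x v
    have h1 : φ (τ x w) = linHom ρ ρ x (φ w) := IntertwiningMap.isIntertwining _ _ φ x w
    have h2 : τ x w = c x • w := hc x
    rw [h2, map_smul] at h1
    have h3 := LinearMap.congr_fun h1 (ρ x v)
    simp [linHom_apply] at h3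
    exact h3.symm
  have hinj : ∀ φ : IntertwiningMap τ (linHom ρ ρ), φ w = 0 → φ = 0 := by
    intro φ h
    have := hirr (LinearMap.ker φ.toLinearMap) (by
      intro g v hv
      have hv' : φ v = 0 := hv
      change φ (τ g v) = 0
      rw [IntertwiningMap.isIntertwining _ _ φ, hv', map_zero])
    rcases this with h1 | h1
    · exfalso
      have : w ∈ LinearMap.ker φ.toLinearMap := h
      rw [h1] at this
      exact hw0 this
    · apply IntertwiningMap.ext
      apply LinearMap.ext
      intro v
      have : v ∈ LinearMap.ker φ.toLinearMap := h1 ▸ Submodule.mem_top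
      exact this
  have hst := stable_cases_of_scalar (ρ.comp L.subtype)
    (fun f hf => hs f (fun g hg v => hf ⟨g, hg⟩ v))
  have hinv : ∀ φ : IntertwiningMap τ (linHom ρ ρ), φ ≠ 0 → Function.Bijective (φ w) := by
    intro φ h0
    have hk : LinearMap.ker (φ w) = ⊥ := by
      rcases hst (LinearMap.ker (φ w)) (by
        intro x v hv
        have h2 := hkey φ x v
        rw [LinearMap.mem_ker.1 hv, map_zero] at h2
        exact LinearMap.mem_ker.2 ((smul_eq_zero.1 h2.symm).resolve_left (hc0 x))) with h | h
      · exact h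
      · exfalso
        exact h0 (hinj φ (LinearMap.ker_eq_top.1 h))
    have hi := LinearMap.ker_eq_bot.1 hk
    exact ⟨hi, LinearMap.injective_iff_surjective.1 hi⟩
  by_cases hall : ∀ φ : IntertwiningMap τ (linHom ρ ρ), φ = 0
  · exact _root_.finrank_le_one 0 (fun φ => ⟨0, by rw [hall φ, smul_zero]⟩)
  · push Not at hall
    obtain ⟨φ, hφ⟩ := hall
    refine _root_.finrank_le_one φ (fun ψ => ?_)
    let e := LinearEquiv.ofBijective (φ w) (hinv φ hφ)
    have he : ∀ v, φ w (e.symm v) = v := fun v => e.apply_symm_apply v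
    obtain ⟨d, hd⟩ := hs ((ψ w) ∘ₗ e.symm.toLinearMap) (by
      intro g hg v
      have h1 := hkey ψ ⟨g, hg⟩ (e.symm v)
      have h2 := hkey φ ⟨g, hg⟩ (e.symm v)
      rw [he] at h2
      have h3 : e.symm (ρ g v) = c ⟨g, hg⟩ • ρ g (e.symm v) := by
        apply e.injective
        rw [e.apply_symm_apply, map_smul]
        exact h2
      simp only [LinearMap.comp_apply, LinearEquiv.coe_coe]
      rw [h3, map_smul]
      exact h1.symm)
    refine ⟨d, ?_⟩
    rw [← sub_eq_zero]
    apply hinj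
    ext v
    have h4 := LinearMap.congr_fun hd (φ w v)
    have h5 : e.symm (φ w v) = v := e.symm_apply_apply v
    simp [h5] at h4
    simp [h4]
end MultOne

namespace MultOne
open Representation
set_option linter.unusedSectionVars false

variable {G V W : Type} [Group G] [Fintype G] [AddCommGroup V] [Module ℂ V] [FiniteDimensional ℂ V]
  [AddCommGroup W] [Module ℂ W] [FiniteDimensional ℂ W]

theorem rep_pow_card (ρ : Representation ℂ G V) (g : G) : ρ g ^ (Fintype.card G) = 1 := by
  rw [← map_pow, pow_card_eq_one, map_one]

theorem conj_character (ρ : Representation ℂ G V) (g : G) :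
    (starRingEnd ℂ) (ρ.character g) = ρ.character g⁻¹ :=
  trace_inv (ρ g) (ρ g⁻¹) _ Fintype.card_pos (rep_pow_card ρ g) (by rw [← map_mul]; simp)

theorem eq_one_of_mem_charKer (ρ : Representation ℂ G V) (g : G)
    (h : g ∈ charKer G ρ.character) : ρ g = 1 := by
  refine eq_one_of_trace (ρ g) _ Fintype.card_pos (rep_pow_card ρ g) ?_
  have h' : ρ.character g = ρ.character 1 := h
  rw [char_one] at h'
  exact h'

theorem charInner_eq (ρ : Representation ℂ G V) (τ : Representation ℂ G W) :
    charInner G (fun g => ρ.character g * (starRingEnd ℂ) (ρ.character g)) τ.character =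
      finrank ℂ (IntertwiningMap τ (linHom ρ ρ)) := by
  have := invertibleOfNonzero (NeZero.ne (Nat.card G : ℂ))
  rw [← card_inv_mul_sum_char_mul_char_eq_finrank, charInner, Nat.card_eq_fintype_card]
  congr 1
  refine Finset.sum_congr rfl fun g _ => ?_
  rw [char_linHom, conj_character, conj_character, mul_comm (ρ.character g)]

theorem charInner_eq_fdRep (V : FDRep ℂ G) (τ : Representation ℂ G W) :
    charInner G (fun g => V.character g * (starRingEnd ℂ) (V.character g)) τ.character =
      finrank ℂ (IntertwiningMap τ (linHom V.ρ V.ρ)) := charInner_eq V.ρ τ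

theorem charInner_eq_fdRep_fdRep (V A : FDRep ℂ G) :
    charInner G (fun g => V.character g * (starRingEnd ℂ) (V.character g)) A.character =
      finrank ℂ (IntertwiningMap A.ρ (linHom V.ρ V.ρ)) := charInner_eq V.ρ A.ρ

theorem finrank_invariants_of_simple (V : FDRep ℂ G) (h : CategoryTheory.Simple V) :
    finrank ℂ (linHom V.ρ V.ρ).invariants = 1 := by
  rw [(Representation.linHom.invariantsEquivFDRepHom V V).finrank_eq]
  exact (FDRep.simple_iff_end_is_rank_one V).1 h

theorem isIrrChar_of_stable (σ : Representation ℂ G V) (hV : Nontrivial V)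
    (h : ∀ X : Submodule ℂ V, (∀ g, ∀ v ∈ X, σ g v ∈ X) → X = ⊥ ∨ X = ⊤) :
    IsIrrChar G σ.character := by
  have hirr : IsIrreducible σ :=
    { exists_pair_ne := ⟨⊥, ⊤, fun hh => bot_ne_top (congrArg Subrepresentation.toSubmodule hh)⟩
      eq_bot_or_eq_top := fun X => by
        rcases h X.toSubmodule X.apply_mem_toSubmodule with h1 | h1
        · exact Or.inl (Subrepresentation.toSubmodule_injective h1)
        · exact Or.inr (Subrepresentation.toSubmodule_injective h1) }
  refine ⟨FDRep.of σ, ?_, rfl⟩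
  rw [FDRep.simple_iff_end_is_rank_one,
    ← (Representation.linHom.invariantsEquivFDRepHom (FDRep.of σ) (FDRep.of σ)).finrank_eq]
  have h1 := (invariantsEquivIntertwiningMap σ σ).finrank_eq
  rw [IsIrreducible.finrank_intertwiningMap_self σ] at h1
  exact h1

/-- A nontrivial irreducible subrepresentation among the `L`-invariants. -/
theorem exists_nontrivial_irr (σ : Representation ℂ G V) (L : Subgroup G) [hL : L.Normal]
    (hlt : finrank ℂ σ.invariants < finrank ℂ (invariants (σ.comp L.subtype))) :
    ∃ U : Subrepresentation σ, IsIrrChar G U.toRepresentation.character ∧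
      U.toRepresentation.character ≠ (fun _ => 1) ∧
      finrank ℂ (IntertwiningMap U.toRepresentation σ) ≠ 0 ∧
      ∀ g ∈ L, g ∈ charKer G U.toRepresentation.character := by
  obtain ⟨C, hC, hc⟩ := exists_stable_compl σ σ.invariants
    (by intro g v hv h; rw [hv g, hv h])
  set X := invariants (σ.comp L.subtype) with hXdef
  have hXst : ∀ g, ∀ v ∈ X, σ g v ∈ X := by
    intro g v hv x
    have h1 := hv ⟨g⁻¹ * x * g, by simpa using hL.conj_mem x x.2 g⁻¹⟩
    have h2 : σ (g⁻¹ * x * g) v = v := h1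
    change σ x (σ g v) = σ g v
    conv_rhs => rw [← h2]
    rw [← Module.End.mul_apply, ← Module.End.mul_apply, ← map_mul, ← map_mul]
    congr 2
    group
  have hne : C ⊓ X ≠ ⊥ := by
    intro h
    have h1 := Submodule.finrank_sup_add_finrank_inf_eq C X
    rw [h, finrank_bot] at h1
    have h2 := Submodule.finrank_add_eq_of_isCompl hc
    have h3 := Submodule.finrank_le (C ⊔ X)
    omega
  obtain ⟨U, hU, hUX, hU0, hmin⟩ := exists_atom σ (C ⊓ X)
    (fun g v hv => ⟨hC g v hv.1, hXst g v hv.2⟩) hne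
  have hnt : Nontrivial U := Submodule.nontrivial_iff_ne_bot.2 hU0
  let U' : Subrepresentation σ := ⟨U, hU⟩
  have hact : ∀ g (u : U), ((U'.toRepresentation g u : U) : V) = σ g u := fun g u => rfl
  refine ⟨U', ?_, ?_, ?_, ?_⟩
  · apply isIrrChar_of_stable (V := U)
    · exact hnt
    intro Y hY
    by_cases h0 : Y = ⊥
    · exact Or.inl h0
    · right
      have h1 := hmin (Y.map U.subtype) (by
        rintro g _ ⟨y, hy, rfl⟩
        exact ⟨U'.toRepresentation g y, hY g y hy, rfl⟩) (Submodule.map_subtype_le U Y) (by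
        intro h
        exact h0 (Submodule.map_injective_of_injective U.injective_subtype
          (h.trans (Submodule.map_bot _).symm)))
      rw [eq_top_iff]
      rintro ⟨u, hu⟩ -
      have h2 : u ∈ Y.map U.subtype := by rw [h1]; exact hu
      obtain ⟨y, hy, hyu⟩ := h2
      have : y = ⟨u, hu⟩ := Subtype.ext hyu
      rwa [← this]
  · intro h
    have := invertibleOfNonzero (NeZero.ne (Nat.card G : ℂ))
    have h1 := card_inv_mul_sum_char_eq_finrank U'.toRepresentation
    rw [h] at h1
    have h2 : finrank ℂ U'.toRepresentation.invariants = 1 := by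
      have : (finrank ℂ U'.toRepresentation.invariants : ℂ) = 1 := by
        rw [← h1]; simp
      exact_mod_cast this
    obtain ⟨v, hv⟩ := (Module.finrank_pos_iff_exists_ne_zero (R := ℂ)).1 (by rw [h2]; exact one_pos)
    obtain ⟨⟨v, hvU⟩, hvinv⟩ := v
    have h3 : v ∈ σ.invariants := fun g => congrArg Subtype.val (hvinv g)
    have h4 : v ∈ σ.invariants ⊓ C := ⟨h3, (hUX hvU).1⟩
    rw [hc.inf_eq_bot] at h4
    apply hv
    apply Subtype.ext
    apply Subtype.ext
    exact h4
  · intro h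
    have hsub := Module.finrank_zero_iff.1 h
    let ι : IntertwiningMap U'.toRepresentation σ :=
      LinearMap.intertwiningMap_of_isIntertwiningMap _ _ U.subtype (fun g v => rfl)
    have h0 : ι = 0 := Subsingleton.elim _ _
    obtain ⟨u, hu⟩ := exists_ne (0 : U)
    have h1 : ι u = 0 := by rw [h0]; rfl
    exact hu (Subtype.ext h1)
  · intro g hg
    have : U'.toRepresentation g = 1 := by
      apply LinearMap.ext
      intro u
      apply Subtype.ext
      exact (hUX u.2).2 ⟨g, hg⟩
    change LinearMap.trace _ _ _ = LinearMap.trace _ _ _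
    rw [this, map_one U'.toRepresentation]

theorem exists_abelian_over (hs : Group.IsSolvable G) (N : Subgroup G) [N.Normal] (hN : N ≠ ⊤) :
    ∃ L : Subgroup G, L.Normal ∧ N ≤ L ∧ ¬ L ≤ N ∧ ∀ x ∈ L, ∀ y ∈ L, (y * x)⁻¹ * (x * y) ∈ N := by
  have hsq : Group.IsSolvable (G ⧸ N) := inferInstance
  have hex := hsq.solvable
  let n := Nat.find hex
  have hn : derivedSeries (G ⧸ N) n = ⊥ := Nat.find_spec hex
  have hn0 : n ≠ 0 := by
    intro h
    rw [h, derivedSeries_zero] at hn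
    apply hN
    rw [eq_top_iff]
    intro g _
    have : (QuotientGroup.mk' N g) ∈ (⊤ : Subgroup (G ⧸ N)) := Subgroup.mem_top _
    rw [hn, Subgroup.mem_bot] at this
    exact (QuotientGroup.eq_one_iff g).1 this
  obtain ⟨m, hm⟩ := Nat.exists_eq_succ_of_ne_zero hn0
  have hm' : derivedSeries (G ⧸ N) m ≠ ⊥ := Nat.find_min hex (show m < n by omega)
  rw [hm, Nat.succ_eq_add_one, derivedSeries_succ] at hn
  refine ⟨(derivedSeries (G ⧸ N) m).comap (QuotientGroup.mk' N), inferInstance, ?_, ?_, ?_⟩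
  · intro g hg
    rw [Subgroup.mem_comap, QuotientGroup.mk'_apply, (QuotientGroup.eq_one_iff g).2 hg]
    exact one_mem _
  · intro h
    apply hm'
    rw [eq_bot_iff]
    intro q hq
    obtain ⟨g, rfl⟩ := QuotientGroup.mk'_surjective N q
    exact (QuotientGroup.eq_one_iff g).2 (h hq)
  · intro x hx y hy
    have h1 := Subgroup.commutator_mem_commutator (Subgroup.mem_comap.1 hx) (Subgroup.mem_comap.1 hy)
    rw [hn, Subgroup.mem_bot, commutatorElement_eq_one_iff_mul_comm] at h1
    rw [← QuotientGroup.eq]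
    exact h1.symm

end MultOne
end MultOneAux

/-- Theorem C: if `Ker(α j)` is maximal among the kernels of the non-principal
irreducible constituents of `χ ⬝ conj χ`, then `α j` has multiplicity 1. -/
theorem multiplicity_one_of_maximal_kernel (G : Type) [Group G] [Fintype G]
    (hsolv : IsSolvable G) (χ : G → ℂ) (hχ : IsIrrChar G χ) (hdeg : 1 < (χ 1).re)
    (n : ℕ) (α : Fin n → (G → ℂ)) (hinj : Function.Injective α)
    (hirr : ∀ i, IsIrrChar G (α i)) (hnp : ∀ i, α i ≠ fun _ => 1)
    (hconst : ∀ i, charInner G (fun g => χ g * (starRingEnd ℂ) (χ g)) (α i) ≠ 0)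
    (hall : ∀ β : G → ℂ, IsIrrChar G β → β ≠ (fun _ => 1) →
      charInner G (fun g => χ g * (starRingEnd ℂ) (χ g)) β ≠ 0 → ∃ i, β = α i)
    (j : Fin n)
    (hmax : ∀ i, charKer G (α j) ⊆ charKer G (α i) → charKer G (α i) = charKer G (α j)) :
    charInner G (fun g => χ g * (starRingEnd ℂ) (χ g)) (α j) = 1 := by

  classical
  obtain ⟨V, hVs, rfl⟩ := hχ
  obtain ⟨A, hAs, hA⟩ := hirr j
  have hAn := hnp j
  have hAc := hconst j
  rw [← hA] at hAn hAc ⊢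
  have hVinv := MultOne.finrank_invariants_of_simple V hVs
  have hAinv := MultOne.finrank_invariants_of_simple A hAs
  have hAst := MultOne.stable_cases_of_scalar A.ρ (MultOne.scalar_of_finrank A.ρ hAinv)
  have hAnt : Nontrivial A := by
    by_contra hcon
    rw [not_nontrivial_iff_subsingleton] at hcon
    have : Subsingleton (A →ₗ[ℂ] A) := ⟨fun f g => LinearMap.ext fun v => Subsingleton.elim _ _⟩
    rw [Module.finrank_zero_of_subsingleton] at hAinv
    exact absurd hAinv (by norm_num)
  have hVnt : Nontrivial V := by
    by_contra hcon
    rw [not_nontrivial_iff_subsingleton] at hcon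
    have : Subsingleton (V →ₗ[ℂ] V) := ⟨fun f g => LinearMap.ext fun v => Subsingleton.elim _ _⟩
    rw [Module.finrank_zero_of_subsingleton] at hVinv
    exact absurd hVinv (by norm_num)
  let N : Subgroup G := MonoidHom.ker A.ρ
  have hkerN : ∀ g, g ∈ charKer G (α j) ↔ g ∈ N := by
    intro g
    rw [← hA, MonoidHom.mem_ker]
    constructor
    · exact MultOne.eq_one_of_mem_charKer A.ρ g
    · intro h
      change LinearMap.trace _ _ _ = LinearMap.trace _ _ _
      rw [h, map_one A.ρ]
  have hN : N ≠ ⊤ := by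
    intro h
    have hone : ∀ g, A.ρ g = 1 := fun g => by
      have : g ∈ N := h ▸ Subgroup.mem_top g
      exact this
    have hsc := MultOne.scalar_of_finrank A.ρ hAinv
    have h1 : Module.finrank ℂ A = 1 := by
      obtain ⟨v, hv⟩ := exists_ne (0 : A)
      refine (finrank_eq_one_iff_of_nonzero v hv).2 ?_
      refine (hAst (ℂ ∙ v) (fun g w hw => by rw [hone]; exact hw)).resolve_left ?_
      rwa [Submodule.span_singleton_eq_bot]
    apply hAn
    funext g
    change LinearMap.trace _ _ (A.ρ g) = 1
    rw [hone, LinearMap.trace_one, h1, Nat.cast_one]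
  obtain ⟨L, hL, hNL, hLN, hcomm⟩ := MultOne.exists_abelian_over hsolv N hN
  have hfr : Module.finrank ℂ (Representation.invariants
      (MonoidHom.comp (Representation.linHom V.ρ V.ρ) L.subtype)) = 1 := by
    by_contra hcon
    have hle : Module.finrank ℂ (Representation.linHom V.ρ V.ρ).invariants ≤
        Module.finrank ℂ (Representation.invariants
          (MonoidHom.comp (Representation.linHom V.ρ V.ρ) L.subtype)) :=
      Submodule.finrank_mono (fun f hf x => hf x)
    obtain ⟨U, hU1, hU2, hU3, hU4⟩ := MultOne.exists_nontrivial_irr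
      (Representation.linHom V.ρ V.ρ) L (by omega)
    obtain ⟨i, hi⟩ := hall _ hU1 hU2 (by
      rw [MultOne.charInner_eq_fdRep V U.toRepresentation]
      exact_mod_cast hU3)
    rw [hi] at hU4
    have heq := hmax i (fun g hg => hU4 g (hNL ((hkerN g).1 hg)))
    apply hLN
    intro g hg
    rw [← hkerN, ← heq]
    exact hU4 g hg
  have hle := MultOne.finrank_le_one L V.ρ A.ρ hAnt hAst
    (fun f hf => MultOne.scalar_of_finrank (MonoidHom.comp V.ρ L.subtype) hfr f
      (fun g v => hf g g.2 v))
    (fun x hx y hy v => by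
      have h1 : A.ρ ((y * x)⁻¹ * (x * y)) = 1 := hcomm x hx y hy
      have h2 : A.ρ (x * y) = A.ρ (y * x) := by
        calc A.ρ (x * y) = A.ρ ((y * x) * ((y * x)⁻¹ * (x * y))) := by rw [mul_inv_cancel_left]
          _ = A.ρ (y * x) := by rw [map_mul, h1, mul_one]
      rw [map_mul, map_mul] at h2
      exact LinearMap.congr_fun h2 v)
  have hin := MultOne.charInner_eq_fdRep_fdRep V A
  have hne : Module.finrank ℂ (Representation.IntertwiningMap A.ρ
      (Representation.linHom V.ρ V.ρ)) ≠ 0 := by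
    intro h0
    apply hAc
    rw [h0, Nat.cast_zero] at hin
    exact hin
  rw [hin, show Module.finrank ℂ (Representation.IntertwiningMap A.ρ
      (Representation.linHom V.ρ V.ρ)) = 1 by omega, Nat.cast_one]
end

section
/- Let G be a finite solvable group and χ ∈ Irr(G). Then the number of distinct prime divisors of χ(1) is at most η(χ), the number of distinct non-principal irreducible constituents of χ·conj(χ). -/
open scoped Classical BigOperators

section RepHelpers
variable {G : Type} [Group G] [Fintype G] {V : Type} [AddCommGroup V] [Module ℂ V]
  [FiniteDimensional ℂ V]

/-- `U` is stable under `K`. -/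
def StabBy (ρ : Representation ℂ G V) (K : Subgroup G) (U : Submodule ℂ V) : Prop :=
  ∀ k ∈ K, ∀ u ∈ U, ρ k u ∈ U

/-- `W` is an irreducible `K`-subspace. -/
def IrrBy (ρ : Representation ℂ G V) (K : Subgroup G) (W : Submodule ℂ V) : Prop :=
  StabBy ρ K W ∧ W ≠ ⊥ ∧ ∀ U ≤ W, StabBy ρ K U → U ≠ ⊥ → U = W

lemma exists_irrBy (ρ : Representation ℂ G V) (K : Subgroup G) (W : Submodule ℂ V)
    (hW : StabBy ρ K W) (h0 : W ≠ ⊥) : ∃ U ≤ W, IrrBy ρ K U := by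
  obtain ⟨U, ⟨hUW, hUK, hU0⟩, hmin⟩ := WellFounded.has_min
    (wellFounded_lt : WellFounded ((· < ·) : Submodule ℂ V → Submodule ℂ V → Prop))
    {U | U ≤ W ∧ StabBy ρ K U ∧ U ≠ ⊥} ⟨W, le_rfl, hW, h0⟩
  refine ⟨U, hUW, hUK, hU0, fun X hX hXK hX0 => ?_⟩
  by_contra hne
  exact hmin X ⟨hX.trans hUW, hXK, hX0⟩ (lt_of_le_of_ne hX hne)

lemma exists_proj (ρ : Representation ℂ G V) (K : Subgroup G) (U : Submodule ℂ V)
    (hU : StabBy ρ K U) : ∃ P : V →ₗ[ℂ] V, (∀ v, P v ∈ U) ∧ (∀ u ∈ U, P u = u) ∧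
      ∀ k ∈ K, ∀ v, P (ρ k v) = ρ k (P v) := by
  obtain ⟨f, hf⟩ := U.subtype.exists_leftInverse_of_injective (by simp)
  have hf' : ∀ u (hu : u ∈ U), f u = ⟨u, hu⟩ := fun u hu => by
    have := LinearMap.congr_fun hf ⟨u, hu⟩
    simpa using this
  let P : V →ₗ[ℂ] V := (Fintype.card K : ℂ)⁻¹ •
    ∑ k : K, ρ k ∘ₗ (U.subtype ∘ₗ f) ∘ₗ ρ (k : G)⁻¹
  have hP : ∀ v, P v = (Fintype.card K : ℂ)⁻¹ • ∑ k : K, ρ k (f (ρ (k : G)⁻¹ v)) := by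
    intro v; simp [P, LinearMap.sum_apply]
  refine ⟨P, fun v => ?_, fun u hu => ?_, fun k hk v => ?_⟩
  · rw [hP]
    exact U.smul_mem _ (U.sum_mem fun k _ => hU k k.2 _ (f _).2)
  · rw [hP]
    have : ∀ k : K, ρ k (f (ρ (k : G)⁻¹ u)) = u := fun k => by
      rw [hf' _ (hU _ (K.inv_mem k.2) u hu)]
      simp [← Module.End.mul_apply, ← map_mul]
    simp only [this, Finset.sum_const, Finset.card_univ]
    rw [← Nat.cast_smul_eq_nsmul ℂ, smul_smul, inv_mul_cancel₀, one_smul]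
    exact_mod_cast Fintype.card_ne_zero
  · rw [hP, hP, map_smul, map_sum]
    congr 1
    rw [← Equiv.sum_comp (Equiv.mulLeft (⟨k, hk⟩ : K))]
    refine Finset.sum_congr rfl fun x _ => ?_
    simp [← Module.End.mul_apply, ← map_mul, mul_assoc]

lemma sum_roots_aux {p : ℕ} {ζ : ℂ} (hζ : IsPrimitiveRoot ζ p) (hp : 1 < p) (a : ℕ → V) :
    ∑ j ∈ Finset.range p, ∑ i ∈ Finset.range p, ζ ^ (i * j) • a i = (p : ℂ) • a 0 := by
  rw [Finset.sum_comm]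
  rw [Finset.sum_eq_single 0]
  · simp [Nat.cast_smul_eq_nsmul]
  · intro i hi hi0
    rw [← Finset.sum_smul]
    have : ∑ j ∈ Finset.range p, ζ ^ (i * j) = 0 := by
      have h1 : ζ ^ i ≠ 1 := hζ.pow_ne_one_of_pos_of_lt hi0 (Finset.mem_range.1 hi)
      have h2 := geom_sum_eq h1 p
      simp only [← pow_mul] at h2
      rw [h2, mul_comm i p, pow_mul, hζ.pow_eq_one]; simp
    rw [this, zero_smul]
  · intro h; simp at h; omega

lemma irr_step (ρ : Representation ℂ G V) {p : ℕ} (hp : p.Prime) (M K : Subgroup G)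
    (k0 : G) (hk0 : k0 ∈ K) (hgen : ∀ k ∈ K, ∃ i : ℕ, ∃ m ∈ M, k = k0 ^ i * m)
    (hk0p : k0 ^ p ∈ M) (hnorm : ∀ g ∈ K, ∀ m ∈ M, g⁻¹ * m * g ∈ M)
    (W : Submodule ℂ V) (hW : IrrBy ρ K W) (hWM : StabBy ρ M W) :
    ∃ U ≤ W, IrrBy ρ M U ∧ ∃ e : ℕ,
      Module.finrank ℂ W = p ^ e * Module.finrank ℂ U := by
  obtain ⟨hWK, hW0, hWirr⟩ := hW
  have rmul : ∀ (a b : G) (v : V), ρ a (ρ b v) = ρ (a * b) v := fun a b v => by simp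
  have hpow : ∀ (U : Submodule ℂ V), (∀ u ∈ U, ρ k0 u ∈ U) → ∀ (i : ℕ), ∀ u ∈ U,
      ρ (k0 ^ i) u ∈ U := by
    intro U h i
    induction i with
    | zero => intro u hu; simpa using hu
    | succ n ih => intro u hu; rw [pow_succ', ← rmul]; exact h _ (ih u hu)
  have hstab : ∀ U : Submodule ℂ V, StabBy ρ M U → (∀ u ∈ U, ρ k0 u ∈ U) → StabBy ρ K U := by
    intro U hM h k hk u hu
    obtain ⟨i, m, hm, rfl⟩ := hgen k hk
    rw [← rmul]
    exact hpow U h i _ (hM m hm u hu)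
  by_cases hirr : ∀ U ≤ W, StabBy ρ M U → U ≠ ⊥ → U = W
  · exact ⟨W, le_rfl, ⟨hWM, hW0, hirr⟩, 0, by simp⟩
  push Not at hirr
  obtain ⟨U', hU'W, hU'M, hU'0, hU'ne⟩ := hirr
  obtain ⟨P, hPr, hPid, hPc⟩ := exists_proj ρ M U' hU'M
  obtain ⟨ζ, hζ⟩ : ∃ ζ : ℂ, IsPrimitiveRoot ζ p :=
    ⟨_, Complex.isPrimitiveRoot_exp p hp.ne_zero⟩
  let S : ℕ → V →ₗ[ℂ] V := fun i => ρ (k0 ^ i) ∘ₗ P ∘ₗ ρ (k0 ^ i)⁻¹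
  have hS : ∀ i v, S i v = ρ (k0 ^ i) (P (ρ (k0 ^ i)⁻¹ v)) := fun i v => rfl
  have hS0 : S 0 = P := by ext v; simp [hS]
  have hSp : S p = P := by
    ext v
    rw [hS, ← hPc _ hk0p, rmul]; simp
  have hSsucc : ∀ i v, S (i + 1) (ρ k0 v) = ρ k0 (S i v) := by
    intro i v
    have h1 : (k0 ^ (i + 1))⁻¹ * k0 = (k0 ^ i)⁻¹ := by rw [pow_succ']; group
    rw [hS, hS, rmul, rmul, h1, pow_succ']
  have hSM : ∀ i, ∀ m ∈ M, ∀ v, S i (ρ m v) = ρ m (S i v) := by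
    intro i m hm v
    have hm' := hnorm _ (K.pow_mem hk0 i) m hm
    have h1 : (k0 ^ i)⁻¹ * m = ((k0 ^ i)⁻¹ * m * k0 ^ i) * (k0 ^ i)⁻¹ := by group
    have h2 : m * k0 ^ i = k0 ^ i * ((k0 ^ i)⁻¹ * m * k0 ^ i) := by group
    rw [hS, hS, rmul m, h2, rmul _ m, h1, ← rmul _ (k0 ^ i)⁻¹, hPc _ hm', rmul]
    congr 2; group
  have hSW : ∀ i v, S i v ∈ W := fun i v =>
    hWK _ (K.pow_mem hk0 i) _ (hU'W (hPr _))
  let T : ℕ → V →ₗ[ℂ] V := fun j => ∑ i ∈ Finset.range p, ζ ^ (i * j) • S i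
  have hT : ∀ j v, T j v = ∑ i ∈ Finset.range p, ζ ^ (i * j) • S i v := fun j v => by
    simp [T, LinearMap.sum_apply]
  have hTM : ∀ j, ∀ m ∈ M, ∀ v, T j (ρ m v) = ρ m (T j v) := by
    intro j m hm v
    simp only [hT, map_sum, map_smul, hSM _ m hm]
  have hTW : ∀ j v, T j v ∈ W := fun j v => by
    rw [hT]; exact W.sum_mem fun i _ => W.smul_mem _ (hSW _ _)
  have hTk : ∀ j v, T j (ρ k0 v) = ζ ^ j • ρ k0 (T j v) := by
    intro j v
    have h1 := Finset.sum_range_succ (fun i => ζ ^ (i * j) • S i (ρ k0 v)) p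
    rw [Finset.sum_range_succ'] at h1
    have h2 : ζ ^ (p * j) • S p (ρ k0 v) = ζ ^ (0 * j) • S 0 (ρ k0 v) := by
      rw [hSp, hS0, pow_mul, hζ.pow_eq_one]; simp
    rw [h2] at h1
    have h3 := add_right_cancel h1
    rw [hT, hT, ← h3, map_sum, Finset.smul_sum]
    refine Finset.sum_congr rfl fun i _ => ?_
    rw [hSsucc, map_smul, smul_smul]
    congr 1; ring
  -- some twisted component is nonzero on `W`
  obtain ⟨j, hj0, hjp, w0, hw0, hTw0⟩ : ∃ j, 0 < j ∧ j < p ∧ ∃ w ∈ W, T j w ≠ 0 := by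
    by_contra hcon
    push Not at hcon
    have key : ∀ w ∈ W, (p : ℂ) • P w = T 0 w := by
      intro w hw
      have h1 := sum_roots_aux hζ hp.one_lt (fun i => S i w)
      simp only [← hT] at h1
      rw [← hS0, ← h1, Finset.sum_eq_single 0]
      · intro j hj hj0
        exact hcon j (Nat.pos_of_ne_zero hj0) (Finset.mem_range.1 hj) w hw
      · intro h; simp at h; exact absurd h hp.ne_zero
    have hp0 : (p : ℂ) ≠ 0 := by exact_mod_cast hp.ne_zero
    refine hU'ne (hWirr U' hU'W (hstab U' hU'M ?_) hU'0)
    intro u hu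
    have h1 := key u (hU'W hu)
    have h2 := key (ρ k0 u) (hWK _ hk0 _ (hU'W hu))
    rw [hTk, ← h1, hPid u hu] at h2
    simp only [pow_zero, one_smul, map_smul] at h2
    have h3 := smul_right_injective V hp0 h2
    rw [← h3]; exact hPr _
  set lam : ℂ := ζ ^ j with hlam
  have hlamprim : IsPrimitiveRoot lam p := by
    refine hζ.pow_of_coprime j ?_
    exact (Nat.coprime_of_lt_prime hj0.ne' hjp hp).symm
  have hlam0 : lam ≠ 0 := hlamprim.ne_zero hp.ne_zero
  -- injectivity on `W`
  have hinj : ∀ w ∈ W, T j w = 0 → w = 0 := by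
    have hker : StabBy ρ K (LinearMap.ker (T j) ⊓ W) := by
      refine hstab _ ?_ ?_
      · intro m hm u hu
        refine ⟨?_, hWM m hm u hu.2⟩
        have := hu.1
        rw [SetLike.mem_coe, LinearMap.mem_ker] at this ⊢
        rw [hTM _ m hm, this, map_zero]
      · intro u hu
        refine ⟨?_, hWK _ hk0 u hu.2⟩
        have := hu.1
        rw [SetLike.mem_coe, LinearMap.mem_ker] at this ⊢
        rw [hTk, this, map_zero, smul_zero]
    intro w hw hTw
    by_contra hwne
    have h1 := hWirr _ inf_le_right hker (by
      intro hbot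
      have : w ∈ LinearMap.ker (T j) ⊓ W := ⟨hTw, hw⟩
      rw [hbot] at this
      exact hwne (by simpa using this))
    rw [← h1] at hw0
    exact hTw0 hw0.1
  obtain ⟨μ, w1, hw1W, hw1ne, hw1⟩ : ∃ μ : ℂ, ∃ w ∈ W, w ≠ 0 ∧ T j w = μ • w := by
    have : Nontrivial W := Submodule.nontrivial_iff_ne_bot.2 hW0
    obtain ⟨μ, hμ⟩ := Module.End.exists_eigenvalue ((T j).restrict (fun v (_ : v ∈ W) => hTW j v))
    obtain ⟨v, hv⟩ := hμ.exists_hasEigenvector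
    refine ⟨μ, v, v.2, by simpa using hv.2, ?_⟩
    have := hv.apply_eq_smul
    simpa using congrArg Subtype.val this
  have hμ0 : μ ≠ 0 := by
    rintro rfl
    rw [zero_smul] at hw1
    exact hw1ne (hinj _ hw1W hw1)
  obtain ⟨U, hUle, hU⟩ := exists_irrBy ρ M (Module.End.eigenspace (T j) μ ⊓ W) (by
      intro m hm u hu
      refine ⟨?_, hWM m hm u hu.2⟩
      have := hu.1
      rw [SetLike.mem_coe, Module.End.mem_eigenspace_iff] at this ⊢
      rw [hTM _ m hm, this, map_smul]) (by
      intro hbot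
      have : w1 ∈ Module.End.eigenspace (T j) μ ⊓ W :=
        ⟨Module.End.mem_eigenspace_iff.2 hw1, hw1W⟩
      rw [hbot] at this
      exact hw1ne (by simpa using this))
  have hUW : U ≤ W := hUle.trans inf_le_right
  have hUe : ∀ u ∈ U, ∀ i : ℕ, ρ (k0 ^ i) u ∈ Module.End.eigenspace (T j) (lam ^ i * μ) := by
    intro u hu i
    rw [Module.End.mem_eigenspace_iff]
    induction i with
    | zero =>
      have := (hUle hu).1
      rw [SetLike.mem_coe, Module.End.mem_eigenspace_iff] at this
      simpa using this
    | succ n ih =>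
      rw [pow_succ', ← rmul, hTk, ih, map_smul, smul_smul, ← hlam]
      congr 1; ring
  refine ⟨U, hUW, hU, 1, ?_⟩
  let F : (Fin p → U) →ₗ[ℂ] V :=
    ∑ i : Fin p, ρ (k0 ^ (i : ℕ)) ∘ₗ U.subtype ∘ₗ LinearMap.proj i
  have hF : ∀ x, F x = ∑ i : Fin p, ρ (k0 ^ (i : ℕ)) (x i) := fun x => by
    simp [F, LinearMap.sum_apply]
  have hFinj : Function.Injective F := by
    rw [← LinearMap.ker_eq_bot, LinearMap.ker_eq_bot']
    intro x hx
    rw [hF] at hx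
    have hind : iSupIndep (fun i : Fin p => Module.End.eigenspace (T j) (lam ^ (i : ℕ) * μ)) := by
      refine (Module.End.eigenspaces_iSupIndep (T j)).comp (f := fun i : Fin p =>
        lam ^ (i : ℕ) * μ) ?_
      intro a b hab
      have := mul_right_cancel₀ hμ0 hab
      exact Fin.ext (hlamprim.pow_inj a.2 b.2 this)
    ext i
    have hd := (hind i)
    rw [Submodule.disjoint_def] at hd
    have hz := hd (ρ (k0 ^ (i : ℕ)) (x i)) (hUe _ (x i).2 i) (by
      rw [← Finset.add_sum_erase _ _ (Finset.mem_univ i)] at hx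
      rw [eq_neg_of_add_eq_zero_left hx]
      refine Submodule.neg_mem _ (Submodule.sum_mem _ fun l hl => ?_)
      exact Submodule.mem_iSup_of_mem l (Submodule.mem_iSup_of_mem (Finset.ne_of_mem_erase hl)
        (hUe _ (x l).2 l)))
    have := congrArg (ρ (k0 ^ (i : ℕ))⁻¹) hz
    rw [rmul] at this
    simpa using this
  have hFr : LinearMap.range F = W := by
    refine hWirr _ ?_ (hstab _ ?_ ?_) ?_
    · rintro _ ⟨x, rfl⟩
      rw [hF]
      exact W.sum_mem fun i _ => hWK _ (K.pow_mem hk0 _) _ (hUW (x i).2)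
    · rintro m hm _ ⟨x, rfl⟩
      refine ⟨fun i => ⟨ρ ((k0 ^ (i : ℕ))⁻¹ * m * k0 ^ (i : ℕ)) (x i),
        hU.1 _ (hnorm _ (K.pow_mem hk0 _) m hm) _ (x i).2⟩, ?_⟩
      rw [hF, hF, map_sum]
      refine Finset.sum_congr rfl fun i _ => ?_
      simp only
      rw [rmul, rmul]
      congr 2; group
    · rintro _ ⟨x, rfl⟩
      have single : ∀ (i : ℕ), ∀ u ∈ U, ρ (k0 ^ i) u ∈ LinearMap.range F := by
        intro i
        have hsm : ∀ (i : ℕ), i < p → ∀ u ∈ U, ρ (k0 ^ i) u ∈ LinearMap.range F := by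
          intro i hi u hu
          refine ⟨Pi.single ⟨i, hi⟩ ⟨u, hu⟩, ?_⟩
          rw [hF, Finset.sum_eq_single ⟨i, hi⟩]
          · simp
          · intro b _ hb; simp [Pi.single_eq_of_ne hb]
          · simp
        intro u hu
        have : k0 ^ i = k0 ^ (i % p) * (k0 ^ p) ^ (i / p) := by
          rw [← pow_mul, ← pow_add, Nat.mod_add_div]
        rw [this, ← rmul]
        exact hsm _ (Nat.mod_lt _ hp.pos) _ (hU.1 _ (M.pow_mem hk0p _) _ hu)
      rw [hF, map_sum]
      refine Submodule.sum_mem _ fun i _ => ?_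
      rw [rmul, ← pow_succ']
      exact single _ _ (x i).2
    · intro hbot
      rw [LinearMap.range_eq_bot] at hbot
      obtain ⟨u, hu, hu0⟩ := (Submodule.ne_bot_iff _).1 hU.2.1
      have h1 : F (Pi.single ⟨0, hp.pos⟩ ⟨u, hu⟩) = F 0 := by rw [hbot]; rfl
      have h2 := congrFun (hFinj h1) ⟨0, hp.pos⟩
      simp at h2
      exact hu0 h2
  rw [← hFr, LinearMap.finrank_range_of_inj hFinj, Module.finrank_pi_fintype]
  simp

lemma irr_chain (ρ : Representation ℂ G V) {p : ℕ} (hp : p.Prime) (L : Subgroup G) (n : ℕ) :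
    ∀ K : Subgroup G, Nat.card K = n → L ≤ K →
    (∀ x ∈ K, ∀ y ∈ K, x⁻¹ * y⁻¹ * x * y ∈ L) → (∀ x ∈ K, x ^ p ∈ L) →
    ∀ W : Submodule ℂ V, IrrBy ρ K W →
    ∃ U ≤ W, IrrBy ρ L U ∧ ∃ e : ℕ, Module.finrank ℂ W = p ^ e * Module.finrank ℂ U := by
  induction n using Nat.strong_induction_on with
  | _ n ih =>
  intro K hKn hLK hcomm hexp W hW
  rcases eq_or_lt_of_le hLK with rfl | hlt
  · exact ⟨W, le_rfl, hW, 0, by simp⟩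
  obtain ⟨M, ⟨hLM, hMK⟩, hmax⟩ := WellFounded.has_min
    (wellFounded_gt : WellFounded ((· > ·) : Subgroup G → Subgroup G → Prop))
    {M | L ≤ M ∧ M < K} ⟨L, le_rfl, hlt⟩
  obtain ⟨k0, hk0, hk0M⟩ := SetLike.exists_of_lt hMK
  have hnorm : ∀ g ∈ K, ∀ m ∈ M, g⁻¹ * m * g ∈ M := by
    intro g hg m hm
    have h1 := hLM (hcomm m (hMK.le hm) g hg)
    have h2 := M.mul_mem hm h1
    have h3 : g⁻¹ * m * g = m * (m⁻¹ * g⁻¹ * m * g) := by group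
    rwa [h3]
  let N : Subgroup G :=
    { carrier := {g | ∃ i : ℤ, ∃ m ∈ M, g = k0 ^ i * m}
      one_mem' := ⟨0, 1, M.one_mem, by simp⟩
      mul_mem' := by
        rintro _ _ ⟨i, m, hm, rfl⟩ ⟨j, m', hm', rfl⟩
        refine ⟨i + j, _, M.mul_mem (hnorm _ (K.zpow_mem hk0 j) m hm) hm', ?_⟩
        rw [zpow_add]; group
      inv_mem' := by
        rintro _ ⟨i, m, hm, rfl⟩
        refine ⟨-i, _, hnorm _ (K.zpow_mem hk0 (-i)) _ (M.inv_mem hm), ?_⟩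
        group }
  have hMN : M ≤ N := fun m hm => ⟨0, m, hm, by simp⟩
  have hk0N : k0 ∈ N := ⟨1, 1, M.one_mem, by simp⟩
  have hNK : N ≤ K := by
    rintro _ ⟨i, m, hm, rfl⟩
    exact K.mul_mem (K.zpow_mem hk0 i) (hMK.le hm)
  have hNeq : N = K := by
    by_contra hne
    refine hmax N ⟨hLM.trans hMN, lt_of_le_of_ne hNK hne⟩ (lt_of_le_of_ne hMN ?_)
    rintro h
    rw [h] at hk0M
    exact hk0M hk0N
  have hgen : ∀ k ∈ K, ∃ i : ℕ, ∃ m ∈ M, k = k0 ^ i * m := by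
    intro k hk
    rw [← hNeq] at hk
    obtain ⟨i, m, hm, rfl⟩ := hk
    obtain ⟨j, hj⟩ := mem_powers_iff_mem_zpowers.2 (Subgroup.mem_zpowers_iff.2 ⟨i, rfl⟩ :
      k0 ^ i ∈ Subgroup.zpowers k0)
    exact ⟨j, m, hm, by rw [← hj]⟩
  obtain ⟨U, hUW, hU, e, he⟩ := irr_step ρ hp M K k0 hk0 hgen (hLM (hexp _ hk0)) hnorm W hW
    (fun m hm => hW.1 m (hMK.le hm))
  have hcard : Nat.card M < n := by
    rw [← hKn]
    exact Set.ncard_lt_ncard hMK (Set.toFinite _)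
  obtain ⟨U', hU'U, hU', e', he'⟩ := ih _ hcard M rfl hLM
    (fun x hx y hy => hcomm x (hMK.le hx) y (hMK.le hy)) (fun x hx => hexp x (hMK.le hx)) U hU
  exact ⟨U', hU'U.trans hUW, hU', e + e', by rw [he, he']; ring⟩

/-- The fixed space of a subgroup. -/
def fixSub (ρ : Representation ℂ G V) (K : Subgroup G) : Submodule ℂ V where
  carrier := {v | ∀ k ∈ K, ρ k v = v}
  zero_mem' := by intro k _; simp
  add_mem' := by intro a b ha hb k hk; rw [map_add, ha k hk, hb k hk]
  smul_mem' := by intro c a ha k hk; rw [map_smul, ha k hk]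

lemma fixSub_stab (ρ : Representation ℂ G V) (K : Subgroup G) [hK : K.Normal] :
    StabBy ρ ⊤ (fixSub ρ K) := by
  intro g _ v hv k hk
  have h1 := hv _ (hK.conj_mem k hk g⁻¹)
  have h2 : k * g = g * (g⁻¹ * k * g⁻¹⁻¹) := by group
  rw [← Module.End.mul_apply, ← map_mul, h2, map_mul, Module.End.mul_apply, h1]

lemma exists_constituent (ρ : Representation ℂ G V) (L K : Subgroup G) [L.Normal] [K.Normal]
    (hle : L ≤ K) (v : V) (hL : v ∈ fixSub ρ L) (hK : v ∉ fixSub ρ K) :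
    ∃ A : Submodule ℂ V, IrrBy ρ ⊤ A ∧ A ≤ fixSub ρ L ∧ A ⊓ fixSub ρ K = ⊥ := by
  have hLK : fixSub ρ K ≤ fixSub ρ L := fun x hx l hl => hx l (hle hl)
  obtain ⟨Q, hQr, hQid, hQc⟩ := exists_proj ρ ⊤ (fixSub ρ K) (fixSub_stab ρ K)
  obtain ⟨A, hA, hAirr⟩ := exists_irrBy ρ ⊤ (LinearMap.ker Q ⊓ fixSub ρ L) (by
    intro g hg u hu
    refine ⟨?_, fixSub_stab ρ L g hg u hu.2⟩
    have := hu.1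
    rw [SetLike.mem_coe, LinearMap.mem_ker] at this ⊢
    rw [hQc g hg, this, map_zero]) (by
    rw [Submodule.ne_bot_iff]
    refine ⟨v - Q v, ⟨?_, ?_⟩, ?_⟩
    · rw [SetLike.mem_coe, LinearMap.mem_ker, map_sub, hQid _ (hQr v), sub_self]
    · exact Submodule.sub_mem _ hL (hLK (hQr v))
    · intro h
      rw [sub_eq_zero] at h
      exact hK (h ▸ hQr v))
  refine ⟨A, hAirr, hA.trans inf_le_right, ?_⟩
  rw [eq_bot_iff]
  rintro a ⟨ha, haK⟩
  have h1 : Q a = 0 := (hA ha).1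
  rw [hQid a haK] at h1
  simpa using h1

lemma char_inv_eq_conj (ρ : Representation ℂ G V) (g : G) :
    ρ.character g⁻¹ = (starRingEnd ℂ) (ρ.character g) := by
  set f : Module.End ℂ V := ρ g with hf
  set n := Fintype.card G with hn
  have hn0 : n ≠ 0 := Fintype.card_ne_zero
  have hfn : f ^ n = 1 := by rw [hf, ← map_pow, hn, pow_card_eq_one, map_one]
  have hss : f.IsSemisimple := by
    refine Module.End.isSemisimple_of_squarefree_aeval_eq_zero
      (p := (Polynomial.X ^ n - 1 : Polynomial ℂ)) ?_ (by simp [hfn])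
    refine Polynomial.Separable.squarefree ?_
    rw [Polynomial.X_pow_sub_one_separable_iff]
    exact_mod_cast hn0
  have htop := hss.iSup_eigenspace_eq_top
  have hint := DirectSum.isInternal_submodule_of_iSupIndep_of_iSup_eq_top
    f.eigenspaces_iSupIndep htop
  have hfin : {μ | f.eigenspace μ ≠ ⊥}.Finite :=
    WellFoundedGT.finite_ne_bot_of_iSupIndep f.eigenspaces_iSupIndep
  have key : ∀ (h : Module.End ℂ V) (c : ℂ → ℂ),
      (∀ μ, ∀ v ∈ f.eigenspace μ, h v = c μ • v) →
      LinearMap.trace ℂ V h = ∑ μ ∈ hfin.toFinset, c μ * Module.finrank ℂ (f.eigenspace μ) := by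
    intro h c hc
    have hm : ∀ μ, Set.MapsTo h (f.eigenspace μ) (f.eigenspace μ) := by
      intro μ v hv
      rw [SetLike.mem_coe, hc μ v hv]
      exact Submodule.smul_mem _ _ hv
    rw [LinearMap.trace_eq_sum_trace_restrict' hint hfin hm]
    refine Finset.sum_congr rfl fun μ _ => ?_
    have : h.restrict (hm μ) = c μ • LinearMap.id := by
      ext v
      exact hc μ v v.2
    rw [this, map_smul, LinearMap.trace_id, smul_eq_mul]
  have h1 := key f id (fun μ v hv => Module.End.mem_eigenspace_iff.1 hv)
  have h2 := key (ρ g⁻¹) (fun μ => μ⁻¹) (by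
    intro μ v hv
    rw [Module.End.mem_eigenspace_iff] at hv
    have h3 : v = μ • ρ g⁻¹ v := by
      rw [← map_smul, ← hv, hf, ← Module.End.mul_apply, ← map_mul]; simp
    rcases eq_or_ne μ 0 with rfl | h0
    · rw [zero_smul] at h3; rw [h3]; simp
    · conv_rhs => rw [h3]
      rw [smul_smul, inv_mul_cancel₀ h0, one_smul])
  show LinearMap.trace ℂ V (ρ g⁻¹) = (starRingEnd ℂ) (LinearMap.trace ℂ V f)
  rw [h1, h2, map_sum]
  refine Finset.sum_congr rfl fun μ hμ => ?_
  rw [map_mul, map_natCast, id]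
  congr 1
  have hμ' : f.eigenspace μ ≠ ⊥ := by simpa using hμ
  obtain ⟨v, hv, hv0⟩ := (Submodule.ne_bot_iff _).1 hμ'
  have hvec : f.HasEigenvector μ v := ⟨hv, hv0⟩
  have hpow := hvec.pow_apply n
  rw [hfn, Module.End.one_apply] at hpow
  have hμn : μ ^ n = 1 := by
    have : (μ ^ n - 1) • v = 0 := by rw [sub_smul, one_smul, ← hpow, sub_self]
    rcases smul_eq_zero.1 this with h | h
    · exact sub_eq_zero.1 h
    · exact absurd h hv0
  exact Complex.inv_eq_conj (Complex.norm_eq_one_of_pow_eq_one hμn hn0)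

/-- The representation on a stable subspace. -/
def subRep (ρ : Representation ℂ G V) (A : Submodule ℂ V) (hA : StabBy ρ ⊤ A) :
    Representation ℂ G A :=
  Subrepresentation.toRepresentation (⟨A, fun g v hv => hA g trivial v hv⟩ : Subrepresentation ρ)

lemma subRep_apply (ρ : Representation ℂ G V) (A : Submodule ℂ V) (hA : StabBy ρ ⊤ A)
    (g : G) (a : A) : ((subRep ρ A hA g a : A) : V) = ρ g a := rfl

lemma subRep_irreducible (ρ : Representation ℂ G V) (A : Submodule ℂ V) (hA : IrrBy ρ ⊤ A) :
    (subRep ρ A hA.1).IsIrreducible := by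
  have hbt : (⊥ : Subrepresentation (subRep ρ A hA.1)) ≠ ⊤ := by
    intro h
    have h1 := congrArg Subrepresentation.toSubmodule h
    obtain ⟨v, hv, hv0⟩ := (Submodule.ne_bot_iff _).1 hA.2.1
    have h2 : (⟨v, hv⟩ : A) ∈ (⊥ : Submodule ℂ A) := by
      change (⊥ : Submodule ℂ A) = ⊤ at h1
      rw [h1]; trivial
    simp at h2
    exact hv0 h2
  refine { exists_pair_ne := ⟨⊥, ⊤, hbt⟩, eq_bot_or_eq_top := fun X => ?_ }
  by_cases hX : X.toSubmodule = ⊥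
  · left; exact Subrepresentation.toSubmodule_injective hX
  · right
    refine Subrepresentation.toSubmodule_injective ?_
    change X.toSubmodule = ⊤
    have h1 := hA.2.2 (X.toSubmodule.map A.subtype) (Submodule.map_subtype_le _ _) (by
      rintro g _ _ ⟨x, hx, rfl⟩
      exact ⟨subRep ρ A hA.1 g x, X.apply_mem_toSubmodule g hx, rfl⟩) (by
      intro h
      refine hX ((Submodule.eq_bot_iff _).2 fun x hx => ?_)
      have h3 : (x : V) ∈ X.toSubmodule.map A.subtype := ⟨x, hx, rfl⟩
      rw [h, Submodule.mem_bot] at h3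
      exact Subtype.ext h3)
    rw [eq_top_iff]
    rintro ⟨a, ha⟩ _
    rw [← h1] at ha
    obtain ⟨x, hx, hxa⟩ := ha
    have : x = ⟨a, ha⟩ := Subtype.ext hxa
    rwa [← this]

lemma isIrrChar_of_irreducible (ρ : Representation ℂ G V) (h : ρ.IsIrreducible) :
    IsIrrChar G ρ.character := by
  refine ⟨FDRep.of ρ, ?_, rfl⟩
  rw [FDRep.simple_iff_char_is_norm_one]
  have := invertibleOfNonzero (NeZero.ne (Nat.card G : ℂ))
  have h1 := Representation.card_inv_mul_sum_char_mul_char_eq_finrank ρ ρ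
  rw [Representation.IsIrreducible.finrank_intertwiningMap_self] at h1
  have h2 : (Nat.card G : ℂ) ≠ 0 := NeZero.ne _
  change ∑ g : G, ρ.character g * ρ.character g⁻¹ = _
  field_simp at h1
  simpa using h1

lemma irrBy_of_simple (X : FDRep ℂ G) [CategoryTheory.Simple X] :
    IrrBy (V := X) X.ρ ⊤ ⊤ := by
  have := invertibleOfNonzero (NeZero.ne (Nat.card G : ℂ))
  have h0 := (FDRep.simple_iff_char_is_norm_one X).1 inferInstance
  have h1 := Representation.card_inv_mul_sum_char_mul_char_eq_finrank (V := X) (W := X) X.ρ X.ρ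
  change (Nat.card G : ℂ)⁻¹ * ∑ g : G, X.character g * X.character g⁻¹ = _ at h1
  rw [h0, inv_mul_cancel₀ (NeZero.ne _)] at h1
  have h2 : Module.finrank ℂ (Representation.IntertwiningMap (V := X) (W := X) X.ρ X.ρ) = 1 := by
    exact_mod_cast h1.symm
  have hid : (Representation.IntertwiningMap.id (V := X) X.ρ) ≠ 0 := by
    intro h
    have : Subsingleton (Representation.IntertwiningMap (V := X) (W := X) X.ρ X.ρ) := by
      refine ⟨fun a b => ?_⟩
      have hx : ∀ x : X, x = 0 := fun x => by
        have := congrArg (fun F => F x) h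
        simpa using this
      ext x
      rw [hx x]; simp
    rw [Module.finrank_zero_of_subsingleton] at h2
    exact zero_ne_one h2
  have htop : (⊤ : Submodule ℂ X) ≠ ⊥ := by
    intro h
    apply hid
    ext x
    have : x ∈ (⊤ : Submodule ℂ X) := trivial
    rw [h] at this
    simp at this
    simp [this]
  refine ⟨fun _ _ _ _ => trivial, htop, fun U _ hU hU0 => ?_⟩
  obtain ⟨P, hPr, hPid, hPc⟩ := exists_proj (V := X) X.ρ ⊤ U hU
  let F : Representation.IntertwiningMap (V := X) (W := X) X.ρ X.ρ :=
    ⟨P, fun g => LinearMap.ext fun v => hPc g trivial v⟩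
  obtain ⟨c, hc⟩ := (finrank_eq_one_iff_of_nonzero' _ hid).1 h2 F
  have hP : ∀ x : X, P x = c • x := fun x => by
    have := congrArg (fun F => F x) hc
    exact this.symm
  obtain ⟨u, hu, hu0⟩ := (Submodule.ne_bot_iff _).1 hU0
  have hc1 : c = 1 := by
    have h3 := hP u
    rw [hPid u hu] at h3
    have : (c - 1) • u = 0 := by rw [sub_smul, one_smul, ← h3, sub_self]
    rcases smul_eq_zero.1 this with h | h
    · exact sub_eq_zero.1 h
    · exact absurd h hu0
  rw [eq_top_iff]
  intro x _
  have := hPr x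
  rwa [hP, hc1, one_smul] at this

lemma finite_irrChar : {α : G → ℂ | IsIrrChar G α}.Finite := by
  have := invertibleOfNonzero (NeZero.ne (Nat.card G : ℂ))
  let B : LinearMap.BilinForm ℂ (G → ℂ) :=
    LinearMap.mk₂ ℂ (fun φ ψ => ∑ g : G, φ g * ψ g⁻¹)
      (fun a b c => by simp [add_mul, Finset.sum_add_distrib])
      (fun c a b => by simp [Finset.mul_sum, mul_assoc])
      (fun a b c => by simp [mul_add, Finset.sum_add_distrib])
      (fun c a b => by simp only [Pi.smul_apply, smul_eq_mul, Finset.mul_sum]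
                       exact Finset.sum_congr rfl fun _ _ => by ring)
  have hB : ∀ φ ψ, B φ ψ = ∑ g : G, φ g * ψ g⁻¹ := fun _ _ => rfl
  have hli : LinearIndependent ℂ (fun α : {α : G → ℂ | IsIrrChar G α} => (α : G → ℂ)) := by
    refine LinearMap.BilinForm.linearIndependent_of_iIsOrtho (B := B) ?_ ?_
    · rintro ⟨α, X, hX, rfl⟩ ⟨β, Y, hY, rfl⟩ hne
      have h1 := FDRep.char_orthonormal X Y
      rw [if_neg (by
        rintro ⟨i⟩
        exact hne (Subtype.ext (FDRep.char_iso i)))] at h1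
      change B X.character Y.character = 0
      rw [hB]
      exact (mul_eq_zero.1 h1).resolve_left (inv_ne_zero (NeZero.ne _))
    · rintro ⟨α, X, hX, rfl⟩ h
      have h1 := (FDRep.simple_iff_char_is_norm_one X).1 hX
      change B X.character X.character = 0 at h
      rw [hB, h1] at h
      exact NeZero.ne (Nat.card G : ℂ) h
  have hfin := hli.finite_of_isNoetherian
  exact Set.toFinite _

end RepHelpers

section MainArg
variable {G : Type} [Group G] [Fintype G] {V : Type} [AddCommGroup V] [Module ℂ V]
  [FiniteDimensional ℂ V]

/-- The non-principal constituents of `χ ⬝ conj χ` that are not trivial on `K`. -/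
def moverSet (χ : G → ℂ) (K : Subgroup G) : Set (G → ℂ) :=
  {α : G → ℂ | (IsIrrChar G α ∧ α ≠ (fun _ => 1) ∧
    charInner G (fun g => χ g * (starRingEnd ℂ) (χ g)) α ≠ 0) ∧ ∃ k ∈ K, α k ≠ α 1}

lemma new_constituent (ρ : Representation ℂ G V) (L K : Subgroup G) [L.Normal] [K.Normal]
    (hle : L ≤ K) (P : V →ₗ[ℂ] V) (hL : ∀ l ∈ L, ∀ v, P (ρ l v) = ρ l (P v))
    (hK : ¬ ∀ k ∈ K, ∀ v, P (ρ k v) = ρ k (P v)) :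
    ∃ α ∈ moverSet ρ.character K, α ∉ moverSet ρ.character L := by
  have hfix : ∀ M : Subgroup G, P ∈ fixSub (Representation.linHom ρ ρ) M ↔
      ∀ k ∈ M, ∀ v, P (ρ k v) = ρ k (P v) := by
    intro M
    constructor
    · intro h k hk v
      have h1 := h k hk
      have h2 := congrArg (fun T : V →ₗ[ℂ] V => T (ρ k v)) h1
      simp only [Representation.linHom_apply, LinearMap.comp_apply] at h2
      rw [← h2, ← Module.End.mul_apply (ρ k⁻¹), ← map_mul]
      simp
    · intro h k hk
      ext v
      simp only [Representation.linHom_apply, LinearMap.comp_apply]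
      rw [← h k hk, ← Module.End.mul_apply (ρ k), ← map_mul]
      simp
  obtain ⟨A, hA, hAL, hAK⟩ := exists_constituent (Representation.linHom ρ ρ) L K hle P
    ((hfix L).2 hL) (fun h => hK ((hfix K).1 h))
  set σ := subRep (Representation.linHom ρ ρ) A hA.1 with hσ
  have hirr : σ.IsIrreducible := subRep_irreducible _ A hA
  have hmove : ∃ k ∈ K, σ.character k ≠ σ.character 1 := by
    by_contra! hcon
    let τ : Representation ℂ K A := σ.comp K.subtype
    have := invertibleOfNonzero (NeZero.ne (Nat.card K : ℂ))
    have h1 := Representation.card_inv_mul_sum_char_eq_finrank τ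
    have h2 : ∀ k : K, τ.character k = (Module.finrank ℂ A : ℂ) := by
      intro k
      have := hcon k k.2
      rw [Representation.char_one] at this
      exact this
    have h3 : τ.invariants = ⊥ := by
      rw [Submodule.eq_bot_iff]
      intro x hx
      rw [Representation.mem_invariants] at hx
      have h4 : (x : V →ₗ[ℂ] V) ∈ A ⊓ fixSub (Representation.linHom ρ ρ) K := by
        refine ⟨x.2, fun k hk => ?_⟩
        exact congrArg Subtype.val (hx ⟨k, hk⟩)
      rw [hAK, Submodule.mem_bot] at h4
      exact Subtype.ext h4
    rw [h3, finrank_bot, Finset.sum_congr rfl (fun k _ => h2 k), Finset.sum_const,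
      Finset.card_univ, nsmul_eq_mul, ← Nat.card_eq_fintype_card, Nat.cast_zero,
      inv_mul_cancel_left₀ (NeZero.ne _), Nat.cast_eq_zero, Submodule.finrank_eq_zero] at h1
    exact hA.2.1 h1
  refine ⟨σ.character, ⟨⟨isIrrChar_of_irreducible σ hirr, ?_, ?_⟩, hmove⟩, ?_⟩
  · intro h
    obtain ⟨k, _, hk⟩ := hmove
    rw [h] at hk
    exact hk rfl
  · have := invertibleOfNonzero (NeZero.ne (Nat.card G : ℂ))
    have h1 := Representation.card_inv_mul_sum_char_mul_char_eq_finrank σ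
      (Representation.linHom ρ ρ)
    have h2 : charInner G (fun g => ρ.character g * (starRingEnd ℂ) (ρ.character g))
        σ.character = (Module.finrank ℂ
          (Representation.IntertwiningMap σ (Representation.linHom ρ ρ)) : ℂ) := by
      rw [← h1, charInner, Nat.card_eq_fintype_card]
      congr 1
      refine Finset.sum_congr rfl fun g _ => ?_
      rw [Representation.char_linHom, char_inv_eq_conj, char_inv_eq_conj, mul_comm (ρ.character g)]
    rw [h2, Nat.cast_ne_zero]
    let F : Representation.IntertwiningMap σ (Representation.linHom ρ ρ) :=
      ⟨A.subtype, fun g => rfl⟩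
    have hF : F ≠ 0 := by
      intro h
      obtain ⟨v, hv, hv0⟩ := (Submodule.ne_bot_iff _).1 hA.2.1
      exact hv0 (congrArg (fun T => T (⟨v, hv⟩ : A)) h)
    intro h0
    have hfd : FiniteDimensional ℂ
        (Representation.IntertwiningMap σ (Representation.linHom ρ ρ)) :=
      inferInstance
    have := Module.finrank_zero_iff.1 h0
    exact hF (Subsingleton.elim _ _)
  · rintro ⟨_, l, hl, hne⟩
    apply hne
    have : σ l = σ 1 := by
      ext a : 1
      apply Subtype.ext
      rw [map_one, hσ, subRep_apply]
      exact hAL a.2 l hl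
    simp only [Representation.character, this]

lemma exists_lower [Finite G] (hsolv : Group.IsSolvable G) (K : Subgroup G) [hKn : K.Normal]
    (hK : K ≠ ⊥) :
    ∃ p : ℕ, p.Prime ∧ ∃ L : Subgroup G, L.Normal ∧ L < K ∧
      (∀ x ∈ K, ∀ y ∈ K, x⁻¹ * y⁻¹ * x * y ∈ L) ∧ ∀ x ∈ K, x ^ p ∈ L := by
  have hs : Group.IsSolvable G := hsolv
  have hnt : Nontrivial K := (Subgroup.nontrivial_iff_ne_bot K).2 hK
  have hlt : commutator K < ⊤ := Group.IsSolvable.commutator_lt_top_of_nontrivial K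
  have hAb : Nontrivial (Abelianization K) := by
    by_contra h
    rw [not_nontrivial_iff_subsingleton] at h
    have : (commutator K) = ⊤ := by
      rw [← Abelianization.ker_of, eq_top_iff]
      intro x _
      exact Subsingleton.elim _ _
    exact hlt.ne this
  obtain ⟨p, hp, hpd⟩ := Nat.exists_prime_and_dvd
    (Finite.one_lt_card (α := Abelianization K)).ne'
  have : Fact p.Prime := ⟨hp⟩
  obtain ⟨c, hc⟩ := exists_prime_orderOf_dvd_card' p hpd
  let π : Abelianization K →* Abelianization K := powMonoidHom p
  have hπ : ¬ Function.Surjective π := by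
    intro hs
    have hi := Finite.injective_iff_surjective.2 hs
    have h1 : c = 1 := hi (by
      change c ^ p = 1 ^ p
      rw [← hc, pow_orderOf_eq_one, one_pow])
    rw [h1, orderOf_one] at hc
    exact hp.one_lt.ne hc
  let T : Set G := {g | ∃ x ∈ K, ∃ y ∈ K, g = x⁻¹ * y⁻¹ * x * y ∨ g = x ^ p}
  let L0 : Subgroup G := (π.range.comap (Abelianization.of (G := K))).map K.subtype
  have hTK : Subgroup.closure T ≤ L0 := by
    rw [Subgroup.closure_le]
    rintro g ⟨x, hx, y, hy, rfl | rfl⟩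
    · refine ⟨⟨x, hx⟩⁻¹ * ⟨y, hy⟩⁻¹ * ⟨x, hx⟩ * ⟨y, hy⟩, ?_, rfl⟩
      refine ⟨1, ?_⟩
      simp only [map_mul, map_inv, map_one]
      rw [mul_right_comm _ _ (Abelianization.of (⟨x, hx⟩ : K))]
      simp
    · exact ⟨⟨x, hx⟩ ^ p, ⟨Abelianization.of ⟨x, hx⟩, rfl⟩, rfl⟩
  have hL0K : L0 ≤ K := by
    rintro _ ⟨x, _, rfl⟩
    exact x.2
  refine ⟨p, hp, Subgroup.closure T, ?_, lt_of_le_of_ne (hTK.trans hL0K) ?_, ?_, ?_⟩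
  · refine ⟨fun n hn g => ?_⟩
    induction hn using Subgroup.closure_induction with
    | mem t ht =>
      apply Subgroup.subset_closure
      obtain ⟨x, hx, y, hy, rfl | rfl⟩ := ht
      · exact ⟨_, hKn.conj_mem x hx g, _, hKn.conj_mem y hy g, Or.inl (by group)⟩
      · exact ⟨_, hKn.conj_mem x hx g, _, hKn.conj_mem y hy g, Or.inr (by rw [conj_pow])⟩
    | one => simp
    | mul a b _ _ ha hb =>
      have : g * (a * b) * g⁻¹ = (g * a * g⁻¹) * (g * b * g⁻¹) := by group
      rw [this]; exact mul_mem ha hb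
    | inv a _ ha =>
      have : g * a⁻¹ * g⁻¹ = (g * a * g⁻¹)⁻¹ := by group
      rw [this]; exact inv_mem ha
  · intro h
    apply hπ
    intro b
    obtain ⟨x, hxb⟩ := QuotientGroup.mk'_surjective _ b
    rw [← hxb]
    have hx : (x : G) ∈ L0 := hTK (h.ge x.2)
    obtain ⟨x', hx', he⟩ := hx
    have hxx : x' = x := Subtype.ext he
    rw [← hxx]
    exact hx'
  · intro x hx y hy
    exact Subgroup.subset_closure ⟨x, hx, y, hy, Or.inl rfl⟩
  · intro x hx
    exact Subgroup.subset_closure ⟨x, hx, x, hx, Or.inr rfl⟩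

lemma moverSet_finite (χ : G → ℂ) (K : Subgroup G) : (moverSet χ K).Finite :=
  finite_irrChar.subset fun _ h => h.1.1

lemma main_induction (hsolv : Group.IsSolvable G) (ρ : Representation ℂ G V) (n : ℕ) :
    ∀ K : Subgroup G, K.Normal → Nat.card K = n → ∀ W : Submodule ℂ V, IrrBy ρ K W →
      (Module.finrank ℂ W).primeFactors.card ≤ (moverSet ρ.character K).ncard := by
  induction n using Nat.strong_induction_on with
  | _ n ih =>
  intro K hKn hcard W hW
  by_cases hK : K = ⊥
  · subst hK
    obtain ⟨v, hv, hv0⟩ := (Submodule.ne_bot_iff _).1 hW.2.1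
    have h1 := hW.2.2 (ℂ ∙ v) (by rw [Submodule.span_singleton_le_iff_mem]; exact hv) (by
      intro k hk u hu
      rw [Subgroup.mem_bot] at hk
      rw [hk, map_one]; exact hu) (by simpa using hv0)
    rw [← h1, finrank_span_singleton hv0]
    simp
  · obtain ⟨p, hp, L, hLn, hLK, hcomm, hpow⟩ := exists_lower hsolv K hK
    have hcl : Nat.card L < n := by
      rw [← hcard]
      exact Set.ncard_lt_ncard (s := (L : Set G)) (t := (K : Set G)) hLK (Set.toFinite _)
    have hsub : moverSet ρ.character L ⊆ moverSet ρ.character K := by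
      rintro α ⟨h1, l, hl, h2⟩
      exact ⟨h1, l, hLK.le hl, h2⟩
    obtain ⟨U, hUW, hU, e, he⟩ := irr_chain ρ hp L n K hcard hLK.le hcomm hpow W hW
    have hih := ih _ hcl L hLn rfl U hU
    by_cases hUe : U = W
    · rw [← hUe]
      exact hih.trans (Set.ncard_le_ncard hsub (moverSet_finite _ _))
    · obtain ⟨P, hPr, hPid, hPc⟩ := exists_proj ρ L U hU.1
      obtain ⟨α, hα, hα'⟩ := new_constituent ρ L K hLK.le P hPc (by
        intro hc
        refine hUe (hW.2.2 U hUW ?_ hU.2.1)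
        intro k hk u hu
        have := hc k hk u
        rw [hPid u hu] at this
        rw [← this]
        exact hPr _)
      have hlt : (moverSet ρ.character L).ncard < (moverSet ρ.character K).ncard :=
        Set.ncard_lt_ncard ⟨hsub, fun h => hα' (h hα)⟩ (moverSet_finite _ _)
      have hsubp : (Module.finrank ℂ W).primeFactors ⊆
          insert p (Module.finrank ℂ U).primeFactors := by
        intro q hq
        rw [Nat.mem_primeFactors] at hq
        obtain ⟨hq1, hq2, hq3⟩ := hq
        rw [he] at hq2 hq3
        rw [Finset.mem_insert, Nat.mem_primeFactors]
        rcases (Nat.Prime.dvd_mul hq1).1 hq2 with h | h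
        · left; exact (Nat.prime_dvd_prime_iff_eq hq1 hp).1 (hq1.dvd_of_dvd_pow h)
        · right; exact ⟨hq1, h, right_ne_zero_of_mul hq3⟩
      have h5 := Finset.card_le_card hsubp
      have h6 := Finset.card_insert_le p (Module.finrank ℂ U).primeFactors
      omega

end MainArg

/-- Theorem B, first part: for solvable `G`, the degree `χ(1)` has at most
`η(χ)` distinct prime divisors. -/
theorem primeFactors_degree_le_eta (G : Type) [Group G] [Fintype G]
    (hsolv : IsSolvable G) (χ : G → ℂ) (hχ : IsIrrChar G χ)
    (d : ℕ) (hd : χ 1 = (d : ℂ)) :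
    d.primeFactors.card ≤ etaChar G χ := by
  obtain ⟨X, hX, rfl⟩ := hχ
  have h1 := main_induction (V := X) hsolv X.ρ (Nat.card (⊤ : Subgroup G)) ⊤ inferInstance rfl ⊤
    (irrBy_of_simple X)
  have h2 : d = Module.finrank ℂ X := by
    rw [FDRep.char_one] at hd
    exact_mod_cast hd.symm
  rw [finrank_top, ← h2] at h1
  refine h1.trans (Set.ncard_le_ncard (fun α hα => hα.1) ?_)
  exact finite_irrChar.subset fun _ h => h.1
end
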